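/- Let d ≥ 1, let Ω ⊆ ℝ^d be nonempty, open, and convex, let ρ̄ satisfy assumption (T), let ζ satisfy assumption (M), let V satisfy assumption (V), and let (V_k) satisfy assumptions (C) and (Ck). Suppose moreover that V_k ≥ V_1 pointwise for all k ∈ ℕ and that the sublevel sets {x : V_1(x) ≤ c} are compact for every c. For ε > 0 and k ∈ ℕ let F_{ε,k}(μ) = E_ε(μ) + ∫ (ζ_ε*V) dμ + ∫ V_k dμ, and let F(μ) = E(μ) + ∫ V dμ + 𝒱_Ω(μ). If for each ε > 0 and k ∈ ℕ, ρ_{ε,k} is a Borel probability measure with finite second moment minimizing F_{ε,k} over Borel probability measures on ℝ^d with finite second moment, then for any sequences ε_n → 0 and k_n → ∞, the measures ρ_{ε_n,k_n} converge narrowly to ρ, where ρ is the unique minimizer of F over Borel probability measures on ℝ^d. -/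

import Mathlib

/-!
The argument is the direct method combined with a Γ-convergence estimate.

*Upper bound.* If `ν` is a competitor with finite limit energy, Jensen's inequality bounds
`(ζ_ε * ν)²` by `ζ_ε * ν²`, so `E_ε(ν) ≤ E(ν) + η` for small `ε` (`eventually_regEnergyE_le`).
Since `V` is Lipschitz, `ζ_ε * V → V` uniformly, and `V_k = 0` on `closure Ω`. Minimality of
`ρ_{ε,k}` therefore gives `F_{ε,k}(ρ_{ε,k}) ≤ F(ν) + η` eventually (`eventually_energy_le`); here
`Ω` is bounded, being contained in a compact sublevel set of `V_1`, so `ν` has finite second moment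
and a competitor of finite energy exists.

*Compactness.* The energy bound controls `∫ V_1 dρ_{ε,k}`, so the minimizers are tight and
Prokhorov's theorem yields a narrow limit along every ultrafilter (`exists_tendsto_ultrafilter`).
Markov's inequality shows that every limit is supported in `closure Ω`.

*Lower bound.* For `φ ≥ 0` continuous with compact support, evenness of `ζ` and Young's inequality
give `∫ ζ_ε * φ dμ = ∫ φ (ζ_ε * μ) ≤ E_ε(μ) + (1/2) ∫ ρ̄ φ²` (`lintegral_convF_le`). As
`ζ_ε * φ → φ` uniformly, this passes to narrow limits, and the duality principle
`intEnergy_le_of_dual` recovers `E(μ)` as the supremum over `φ`. In particular finiteness of the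
supremum forces absolute continuity (`energy_le_of_tendsto`).

Every ultrafilter limit is thus a minimizer of `F`. Since `E` is strictly convex, the minimizer is
unique (`Flim_minimizer_unique`), so all ultrafilter limits agree and the sequence converges.
-/

open MeasureTheory Filter Topology Metric
open scoped ENNReal RealInnerProductSpace Classical

noncomputable section

/-- Euclidean space `ℝ^d`. -/
abbrev Ed (d : ℕ) := EuclideanSpace ℝ (Fin d)

/-- Rescaled mollifier `ζ_ε(x) = ε^{-d} ζ(x/ε)`. -/
def zE {d : ℕ} (ζ : Ed d → ℝ) (ε : ℝ) (x : Ed d) : ℝ :=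
  (ε ^ d)⁻¹ * ζ (ε⁻¹ • x)

/-- Convolution `ζ_ε * μ` of the rescaled mollifier with a measure. -/
def convM {d : ℕ} (ζ : Ed d → ℝ) (ε : ℝ) (μ : Measure (Ed d)) (x : Ed d) : ℝ :=
  ∫ y, zE ζ ε (x - y) ∂μ

/-- Convolution `ζ_ε * f` of the rescaled mollifier with a function. -/
def convF {d : ℕ} (ζ : Ed d → ℝ) (ε : ℝ) (f : Ed d → ℝ) (x : Ed d) : ℝ :=
  ∫ y, zE ζ ε (x - y) * f y

/-- `(∇ζ_ε) * μ`, the gradient of the mollified measure. -/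
def gradConvM {d : ℕ} (ζ : Ed d → ℝ) (ε : ℝ) (μ : Measure (Ed d)) (x : Ed d) : Ed d :=
  ∫ y, gradient (zE ζ ε) (x - y) ∂μ

/-- `∇ζ_ε * ((ζ_ε*μ)/ρ̄)`. -/
def opT {d : ℕ} (ζ : Ed d → ℝ) (ε : ℝ) (ρb : Ed d → ℝ) (μ : Measure (Ed d)) (x : Ed d) : Ed d :=
  ∫ z, ((convM ζ ε μ z) / ρb z) • gradient (zE ζ ε) (x - z)

/-- Assumption (T): `ρ̄ ∈ C¹` and `1/C ≤ ρ̄ ≤ C`. -/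
def AssumptionT {d : ℕ} (ρb : Ed d → ℝ) : Prop :=
  ContDiff ℝ 1 ρb ∧ ∃ C : ℝ, 0 < C ∧ ∀ x, C⁻¹ ≤ ρb x ∧ ρb x ≤ C

/-- Assumption (M) on the mollifier. -/
def AssumptionM {d : ℕ} (ζ : Ed d → ℝ) : Prop :=
  ContDiff ℝ 2 ζ ∧ (∀ x, ζ (-x) = ζ x) ∧ (∀ x, 0 ≤ ζ x) ∧ ((∫ x, ζ x) = 1) ∧
    (∃ M : ℝ, ∀ x, ‖iteratedFDeriv ℝ 2 ζ x‖ ≤ M) ∧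
    ∃ Cz : ℝ, 0 < Cz ∧ ∃ q q' : ℝ, (d : ℝ) + 1 < q ∧ (d : ℝ) < q' ∧
      ∀ x : Ed d, x ≠ 0 → ζ x ≤ Cz * ‖x‖ ^ (-q) ∧ ‖gradient ζ x‖ ≤ Cz * ‖x‖ ^ (-q')

/-- Assumption (V) on the external potential. -/
def AssumptionV {d : ℕ} (V : Ed d → ℝ) : Prop :=
  ContDiff ℝ 2 V ∧ Integrable V ∧ (∃ M : ℝ, ∀ x, |V x| ≤ M) ∧
    (∃ M : ℝ, ∀ x, ‖gradient V x‖ ≤ M) ∧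
    ∃ lam : ℝ, ∀ x v, lam * ‖v‖ ^ 2 ≤ fderiv ℝ (fun y => fderiv ℝ V y) x v v

/-- Assumption (C) on a confining potential. -/
def AssumptionC {d : ℕ} (W : Ed d → ℝ) : Prop :=
  (∀ x, 0 ≤ W x) ∧ ConvexOn ℝ Set.univ W ∧ ContDiff ℝ 2 W ∧
    ∃ M : ℝ, ∀ x, ‖iteratedFDeriv ℝ 2 W x‖ ≤ M

/-- Assumption (Ck) on the family of confining potentials. -/
def AssumptionCk {d : ℕ} (Ω : Set (Ed d)) (W : ℕ → Ed d → ℝ) : Prop :=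
  (∀ k, ∀ x ∈ Ω, W k x = 0) ∧
    ∀ (c : Ed d) (r : ℝ), 0 < r → closure (ball c r) ⊆ (closure Ω)ᶜ →
      Tendsto (fun k => sInf ((W k) '' (ball c r))) atTop atTop

/-- Narrow convergence of a sequence of measures. -/
def NarrowTendsto {d : ℕ} (μn : ℕ → Measure (Ed d)) (μ : Measure (Ed d)) : Prop :=
  ∀ f : Ed d → ℝ, Continuous f → (∃ M : ℝ, ∀ x, |f x| ≤ M) →
    Tendsto (fun n => ∫ x, f x ∂(μn n)) atTop (𝓝 (∫ x, f x ∂μ))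

/-- The internal energy `E`, with values in `[0,∞]`. -/
def intEnergy {d : ℕ} (ρb : Ed d → ℝ) (μ : Measure (Ed d)) : ℝ≥0∞ :=
  if μ ≪ (volume : Measure (Ed d)) then
    2⁻¹ * ∫⁻ x, (μ.rnDeriv volume x) ^ 2 / ENNReal.ofReal (ρb x)
  else ⊤

/-- The regularized internal energy `E_ε`, with values in `[0,∞]`. -/
def regEnergyE {d : ℕ} (ζ : Ed d → ℝ) (ε : ℝ) (ρb : Ed d → ℝ) (μ : Measure (Ed d)) : ℝ≥0∞ :=
  2⁻¹ * ∫⁻ x, ENNReal.ofReal ((convM ζ ε μ x) ^ 2 / ρb x)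

/-- The regularized internal energy `E_ε`, real-valued. -/
def regEnergyR {d : ℕ} (ζ : Ed d → ℝ) (ε : ℝ) (ρb : Ed d → ℝ) (μ : Measure (Ed d)) : ℝ :=
  (∫ x, (convM ζ ε μ x) ^ 2 / ρb x) / 2

/-- Confinement energy `𝒱_Ω`. -/
def confE {d : ℕ} (Ω : Set (Ed d)) (μ : Measure (Ed d)) : ℝ≥0∞ :=
  if μ ((closure Ω)ᶜ) = 0 then 0 else ⊤

/-- The limit energy `F = E + 𝒱 + 𝒱_Ω`, with values in the extended reals. -/
def Flim {d : ℕ} (ρb V : Ed d → ℝ) (Ω : Set (Ed d)) (μ : Measure (Ed d)) : EReal :=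
  (intEnergy ρb μ : EReal) + ((∫ x, V x ∂μ : ℝ) : EReal) + (confE Ω μ : EReal)

/-- The regularized energy `F_{ε,k} = E_ε + 𝒱_ε + 𝒱_k`, with values in the extended reals. -/
def Fek {d : ℕ} (ζ : Ed d → ℝ) (ε : ℝ) (ρb V W : Ed d → ℝ) (μ : Measure (Ed d)) : EReal :=
  (regEnergyE ζ ε ρb μ : EReal) + ((∫ x, convF ζ ε V x ∂μ : ℝ) : EReal) +
    ((∫⁻ x, ENNReal.ofReal (W x) ∂μ : ℝ≥0∞) : EReal)


/-! ### Mollification -/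

/-- The part of Assumption (M) that the argument uses. Boundedness follows from continuity and
decay at infinity. -/
structure Moll {d : ℕ} (ζ : Ed d → ℝ) : Prop where
  cont : Continuous ζ
  even : ∀ x, ζ (-x) = ζ x
  nonneg : ∀ x, 0 ≤ ζ x
  integral_eq : (∫ x, ζ x) = 1
  bdd : ∃ B : ℝ, ∀ x, ζ x ≤ B

lemma AssumptionM.moll {d : ℕ} {ζ : Ed d → ℝ} (hM : AssumptionM ζ) : Moll ζ := by
  obtain ⟨hc, hev, hnn, hmass, -, Cz, hCz, q, q', hq, -, hdec⟩ := hM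
  refine ⟨hc.continuous, hev, hnn, hmass, ?_⟩
  obtain ⟨B, hB⟩ := (isCompact_closedBall (0 : Ed d) 1).bddAbove_image hc.continuous.continuousOn
  refine ⟨max B Cz, fun x => ?_⟩
  by_cases hx : ‖x‖ ≤ 1
  · exact le_max_of_le_left (hB ⟨x, by simpa using hx, rfl⟩)
  · push Not at hx
    have hx0 : x ≠ 0 := by rintro rfl; simp at hx; linarith
    refine le_max_of_le_right ((hdec x hx0).1.trans ?_)
    have : ‖x‖ ^ (-q) ≤ 1 := Real.rpow_le_one_of_one_le_of_nonpos hx.le (by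
      have : (0 : ℝ) ≤ d := Nat.cast_nonneg d
      linarith)
    nlinarith

lemma Moll.integrable {d : ℕ} {ζ : Ed d → ℝ} (h : Moll ζ) : Integrable ζ := by
  by_contra hn
  have := h.integral_eq
  rw [integral_undef hn] at this
  exact zero_ne_one this

lemma zE_even {d : ℕ} {ζ : Ed d → ℝ} (h : Moll ζ) (ε : ℝ) (x : Ed d) : zE ζ ε (-x) = zE ζ ε x := by
  simp [zE, h.even]

lemma zE_nonneg {d : ℕ} {ζ : Ed d → ℝ} (h : Moll ζ) {ε : ℝ} (hε : 0 < ε) (x : Ed d) :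
    0 ≤ zE ζ ε x := mul_nonneg (by positivity) (h.nonneg _)

lemma zE_cont {d : ℕ} {ζ : Ed d → ℝ} (h : Moll ζ) (ε : ℝ) : Continuous (zE ζ ε) := by
  have := h.cont
  unfold zE
  fun_prop

/-- Change of variables `y = x + ε z`, using that `ζ` is even. -/
lemma convF_eq {d : ℕ} {ζ : Ed d → ℝ} (h : Moll ζ) {ε : ℝ} (hε : 0 < ε) (g : Ed d → ℝ) (x : Ed d) :
    convF ζ ε g x = ∫ z, ζ z * g (x + ε • z) := by
  unfold convF
  rw [← integral_add_left_eq_self _ x]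
  have h1 : ∀ z, zE ζ ε (x - (x + z)) * g (x + z)
      = (ε ^ d)⁻¹ * (fun w => ζ w * g (x + ε • w)) (ε⁻¹ • z) := by
    intro z
    have : x - (x + z) = -z := by abel
    rw [this, zE_even h]
    simp only [zE, smul_smul, mul_inv_cancel₀ hε.ne', one_smul]
    ring
  simp_rw [h1]
  rw [integral_const_mul, Measure.integral_comp_inv_smul_of_nonneg volume
    (fun w => ζ w * g (x + ε • w)) hε.le]
  simp only [finrank_euclideanSpace, Fintype.card_fin, smul_eq_mul]
  rw [inv_mul_cancel_left₀ (by positivity)]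

lemma integrable_mul_shift {d : ℕ} {ζ : Ed d → ℝ} (h : Moll ζ) (ε : ℝ) {g : Ed d → ℝ}
    (hg : Continuous g) {M : ℝ} (hM : ∀ x, |g x| ≤ M) (x : Ed d) :
    Integrable (fun z => ζ z * g (x + ε • z)) := by
  refine h.integrable.mul_bdd (c := M) (by fun_prop) ?_
  exact ae_of_all _ fun z => by simpa using hM _

lemma abs_convF_le {d : ℕ} {ζ : Ed d → ℝ} (h : Moll ζ) {ε : ℝ} (hε : 0 < ε) {g : Ed d → ℝ}
    {M : ℝ} (hM : ∀ x, |g x| ≤ M) (x : Ed d) :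
    |convF ζ ε g x| ≤ M := by
  rw [convF_eq h hε]
  have h1 : ‖∫ z, ζ z * g (x + ε • z)‖ ≤ ∫ z, ζ z * M := by
    refine norm_integral_le_of_norm_le (h.integrable.mul_const M) (ae_of_all _ fun z => ?_)
    rw [norm_mul, Real.norm_of_nonneg (h.nonneg z)]
    exact mul_le_mul_of_nonneg_left (hM _) (h.nonneg z)
  rwa [integral_mul_const, h.integral_eq, one_mul] at h1

lemma convF_sub_eq {d : ℕ} {ζ : Ed d → ℝ} (h : Moll ζ) {ε : ℝ} (hε : 0 < ε) {g : Ed d → ℝ}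
    (hg : Continuous g) {M : ℝ} (hM : ∀ x, |g x| ≤ M) (x : Ed d) :
    convF ζ ε g x - g x = ∫ z, ζ z * (g (x + ε • z) - g x) := by
  have : g x = ∫ z, ζ z * g x := by rw [integral_mul_const, h.integral_eq, one_mul]
  rw [convF_eq h hε]
  conv_lhs => rw [this]
  rw [← integral_sub (integrable_mul_shift h ε hg hM x) (h.integrable.mul_const _)]
  simp_rw [mul_sub]

/-- `ζ_ε * g → g` along a filter of pairs `(ε, x)` on which `g (x + ε z) - g x → 0` for each `z`.
Taking the filter `𝓝 0 ×ˢ ⊤` turns dominated convergence into uniform convergence. -/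
lemma tendsto_convF_sub {d : ℕ} {ζ : Ed d → ℝ} (h : Moll ζ) {g : Ed d → ℝ}
    (hg : Continuous g) {M : ℝ} (hM : ∀ x, |g x| ≤ M) {l : Filter (ℝ × Ed d)}
    [l.IsCountablyGenerated] (hl : ∀ᶠ p in l, 0 < p.1)
    (hlim : ∀ z : Ed d, Tendsto (fun p : ℝ × Ed d => g (p.2 + p.1 • z) - g p.2) l (𝓝 0)) :
    Tendsto (fun p : ℝ × Ed d => convF ζ p.1 g p.2 - g p.2) l (𝓝 0) := by
  have h1 : Tendsto (fun p : ℝ × Ed d => ∫ z, ζ z * (g (p.2 + p.1 • z) - g p.2)) l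
      (𝓝 (∫ _ : Ed d, (0 : ℝ))) := by
    refine tendsto_integral_filter_of_dominated_convergence (fun z => ζ z * (2 * M)) ?_ ?_
      (h.integrable.mul_const _) ?_
    · have := h.cont
      exact Eventually.of_forall fun p => by
        apply Continuous.aestronglyMeasurable; fun_prop
    · refine Eventually.of_forall fun p => ae_of_all _ fun z => ?_
      rw [norm_mul, Real.norm_of_nonneg (h.nonneg z)]
      refine mul_le_mul_of_nonneg_left ?_ (h.nonneg z)
      have a := hM (p.2 + p.1 • z)
      have b := hM p.2
      rw [Real.norm_eq_abs]
      rw [abs_le] at a b ⊢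
      constructor <;> linarith
    · refine ae_of_all _ fun z => ?_
      simpa using (hlim z).const_mul (ζ z)
  rw [integral_zero] at h1
  refine h1.congr' ?_
  filter_upwards [hl] with p hp
  exact (convF_sub_eq h hp hg hM p.2).symm

lemma tendsto_convF_unif {d : ℕ} {ζ : Ed d → ℝ} (h : Moll ζ) {g : Ed d → ℝ}
    (hg : UniformContinuous g) {M : ℝ} (hM : ∀ x, |g x| ≤ M) {η : ℝ} (hη : 0 < η) :
    ∀ᶠ ε in 𝓝[>] (0 : ℝ), ∀ x, |convF ζ ε g x - g x| ≤ η := by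
  have h1 : Tendsto (fun p : ℝ × Ed d => convF ζ p.1 g p.2 - g p.2) (𝓝[>] (0 : ℝ) ×ˢ ⊤) (𝓝 0) := by
    have hfst : Tendsto (fun p : ℝ × Ed d => p.1) (𝓝[>] (0 : ℝ) ×ˢ ⊤) (𝓝[>] 0) := tendsto_fst
    refine tendsto_convF_sub h hg.continuous hM (hfst.eventually self_mem_nhdsWithin) fun z => ?_
    rw [Metric.tendsto_nhds]
    intro r hr
    obtain ⟨δ, hδ, H⟩ := Metric.uniformContinuous_iff.1 hg r hr
    have h2 : Tendsto (fun p : ℝ × Ed d => p.1 • z) (𝓝[>] (0 : ℝ) ×ˢ ⊤) (𝓝 ((0 : ℝ) • z)) :=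
      (hfst.mono_right nhdsWithin_le_nhds).smul_const z
    rw [zero_smul] at h2
    filter_upwards [Metric.tendsto_nhds.1 h2 δ hδ] with p hp
    have := @H (p.2 + p.1 • z) p.2 (by simpa [dist_eq_norm] using hp)
    simpa [Real.dist_eq] using this
  have h2 := Metric.tendsto_nhds.1 h1 η hη
  rw [Filter.eventually_prod_iff] at h2
  obtain ⟨pa, ha, pb, hb, H⟩ := h2
  filter_upwards [ha] with ε hε x
  have := H hε (Filter.eventually_top.1 hb x)
  simpa [Real.dist_eq] using this.le

lemma tendsto_convF_pt {d : ℕ} {ζ : Ed d → ℝ} (h : Moll ζ) {g : Ed d → ℝ}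
    (hg : Continuous g) {M : ℝ} (hM : ∀ x, |g x| ≤ M) (x : Ed d) :
    Tendsto (fun ε => convF ζ ε g x) (𝓝[>] (0 : ℝ)) (𝓝 (g x)) := by
  have h1 : Tendsto (fun p : ℝ × Ed d => convF ζ p.1 g p.2 - g p.2) (𝓝[>] (0 : ℝ) ×ˢ pure x)
      (𝓝 0) := by
    have hfst : Tendsto (fun p : ℝ × Ed d => p.1) (𝓝[>] (0 : ℝ) ×ˢ pure x) (𝓝[>] 0) := tendsto_fst
    have hsnd : Tendsto (fun p : ℝ × Ed d => p.2) (𝓝[>] (0 : ℝ) ×ˢ pure x) (𝓝 x) :=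
      tendsto_snd.mono_right (pure_le_nhds x)
    refine tendsto_convF_sub h hg hM (hfst.eventually self_mem_nhdsWithin) fun z => ?_
    have h2 : Continuous fun p : ℝ × Ed d => g (p.2 + p.1 • z) - g p.2 := by fun_prop
    have h3 := (h2.tendsto (0, x)).comp
      ((hfst.mono_right nhdsWithin_le_nhds).prodMk_nhds hsnd)
    simpa [Function.comp_def] using h3
  have h4 : Tendsto (fun ε : ℝ => (ε, x)) (𝓝[>] (0 : ℝ)) (𝓝[>] (0 : ℝ) ×ˢ pure x) :=
    tendsto_id.prodMk (tendsto_pure.2 (Eventually.of_forall fun _ => rfl))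
  simpa using (h1.comp h4).add_const (g x)

lemma measurable_convF {d : ℕ} {ζ : Ed d → ℝ} (h : Moll ζ) (ε : ℝ) {g : Ed d → ℝ}
    (hg : Continuous g) : Measurable (convF ζ ε g) := by
  have h1 := zE_cont h ε
  have : StronglyMeasurable (Function.uncurry fun x y : Ed d => zE ζ ε (x - y) * g y) := by
    apply Continuous.stronglyMeasurable
    unfold Function.uncurry
    fun_prop
  exact this.integral_prod_right.measurable

lemma lintegral_zE_mul {d : ℕ} {ζ : Ed d → ℝ} (h : Moll ζ) {ε : ℝ} (hε : 0 < ε) {g : Ed d → ℝ}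
    (hg : Continuous g) {M : ℝ} (hM : ∀ x, |g x| ≤ M) (hg0 : ∀ x, 0 ≤ g x) (y : Ed d) :
    ∫⁻ x, ENNReal.ofReal (zE ζ ε (x - y)) * ENNReal.ofReal (g x)
      = ENNReal.ofReal (convF ζ ε g y) := by
  have hz : Integrable (zE ζ ε) := by
    unfold zE
    exact (h.integrable.comp_smul (inv_ne_zero hε.ne')).const_mul _
  have hi : Integrable fun x => zE ζ ε (y - x) * g x := by
    refine Integrable.mul_bdd (c := M) (hz.comp_sub_left y) hg.aestronglyMeasurable ?_
    exact ae_of_all _ hM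
  unfold convF
  rw [ofReal_integral_eq_lintegral_ofReal hi
    (ae_of_all _ fun x => mul_nonneg (zE_nonneg h hε _) (hg0 x))]
  refine lintegral_congr fun x => ?_
  rw [ENNReal.ofReal_mul (zE_nonneg h hε _), ← neg_sub x y, zE_even h]

lemma lintegral_zE {d : ℕ} {ζ : Ed d → ℝ} (h : Moll ζ) {ε : ℝ} (hε : 0 < ε) (x : Ed d) :
    ∫⁻ y, ENNReal.ofReal (zE ζ ε (x - y)) = 1 := by
  have h1 := lintegral_zE_mul h hε (g := fun _ => 1) continuous_const (M := 1) (by simp)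
    (by simp) x
  rw [convF_eq h hε] at h1
  simp only [ENNReal.ofReal_one, mul_one, h.integral_eq] at h1
  rw [← h1]
  refine lintegral_congr fun y => ?_
  rw [← neg_sub x y, zE_even h]

lemma ofReal_convM {d : ℕ} {ζ : Ed d → ℝ} (h : Moll ζ) {ε : ℝ} (hε : 0 < ε)
    (μ : Measure (Ed d)) [IsProbabilityMeasure μ] (x : Ed d) :
    ENNReal.ofReal (convM ζ ε μ x) = ∫⁻ y, ENNReal.ofReal (zE ζ ε (x - y)) ∂μ := by
  obtain ⟨B, hB⟩ := h.bdd
  have hz := zE_cont h ε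
  unfold convM
  refine ofReal_integral_eq_lintegral_ofReal ?_ (ae_of_all _ fun y => zE_nonneg h hε _)
  refine Integrable.of_bound (C := (ε ^ d)⁻¹ * B)
    (Continuous.aestronglyMeasurable (by fun_prop)) (ae_of_all _ fun y => ?_)
  rw [Real.norm_of_nonneg (zE_nonneg h hε _)]
  exact mul_le_mul_of_nonneg_left (hB _) (by positivity)

lemma convM_nonneg {d : ℕ} {ζ : Ed d → ℝ} (h : Moll ζ) {ε : ℝ} (hε : 0 < ε)
    (μ : Measure (Ed d)) (x : Ed d) : 0 ≤ convM ζ ε μ x :=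
  integral_nonneg fun _ => zE_nonneg h hε _

lemma measurable_convM {d : ℕ} {ζ : Ed d → ℝ} (h : Moll ζ) (ε : ℝ)
    (μ : Measure (Ed d)) [IsProbabilityMeasure μ] : Measurable (convM ζ ε μ) := by
  have h1 := zE_cont h ε
  have : StronglyMeasurable (Function.uncurry fun x y : Ed d => zE ζ ε (x - y)) := by
    apply Continuous.stronglyMeasurable
    unfold Function.uncurry
    fun_prop
  exact this.integral_prod_right.measurable

/-! ### The regularized energy: lower and upper bounds -/

/-- Young's inequality against a test function: the dual lower bound on `E_ε`. -/
lemma lintegral_convF_le {d : ℕ} {ζ : Ed d → ℝ} (h : Moll ζ) {ε : ℝ} (hε : 0 < ε)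
    {ρb : Ed d → ℝ} (hρc : Continuous ρb) (hρ : ∀ x, 0 < ρb x)
    (μ : Measure (Ed d)) [IsProbabilityMeasure μ] {φ : Ed d → ℝ} (hφ : Continuous φ)
    {M : ℝ} (hM : ∀ x, |φ x| ≤ M) (hφ0 : ∀ x, 0 ≤ φ x) :
    ∫⁻ y, ENNReal.ofReal (convF ζ ε φ y) ∂μ
      ≤ regEnergyE ζ ε ρb μ + 2⁻¹ * ∫⁻ x, ENNReal.ofReal (ρb x * φ x ^ 2) := by
  have hz := zE_cont h ε
  have hcm := measurable_convM h ε μ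
  calc ∫⁻ y, ENNReal.ofReal (convF ζ ε φ y) ∂μ
      = ∫⁻ y, (∫⁻ x, ENNReal.ofReal (zE ζ ε (x - y)) * ENNReal.ofReal (φ x)) ∂μ :=
        lintegral_congr fun y => (lintegral_zE_mul h hε hφ hM hφ0 y).symm
    _ = ∫⁻ x, ∫⁻ y, ENNReal.ofReal (zE ζ ε (x - y)) * ENNReal.ofReal (φ x) ∂μ := by
        apply lintegral_lintegral_swap
        apply Measurable.aemeasurable
        unfold Function.uncurry
        exact (Continuous.measurable (by fun_prop)).ennreal_ofReal.mul
          (Continuous.measurable (by fun_prop)).ennreal_ofReal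
    _ = ∫⁻ x, ENNReal.ofReal (convM ζ ε μ x) * ENNReal.ofReal (φ x) := by
        refine lintegral_congr fun x => ?_
        rw [lintegral_mul_const' _ _ ENNReal.ofReal_ne_top, ofReal_convM h hε]
    _ ≤ ∫⁻ x, (2⁻¹ * ENNReal.ofReal (convM ζ ε μ x ^ 2 / ρb x)
          + 2⁻¹ * ENNReal.ofReal (ρb x * φ x ^ 2)) := by
        refine lintegral_mono fun x => ?_
        have h2 : (2⁻¹ : ℝ≥0∞) = ENNReal.ofReal (2⁻¹ : ℝ) := by
          rw [ENNReal.ofReal_inv_of_pos (by norm_num)]; norm_num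
        have hp := hρ x
        rw [h2, ← ENNReal.ofReal_mul (convM_nonneg h hε μ x), ← ENNReal.ofReal_mul (by norm_num),
          ← ENNReal.ofReal_mul (by norm_num), ← ENNReal.ofReal_add (by positivity) (by positivity)]
        refine ENNReal.ofReal_le_ofReal ?_
        have : 2⁻¹ * (convM ζ ε μ x ^ 2 / ρb x) + 2⁻¹ * (ρb x * φ x ^ 2) - convM ζ ε μ x * φ x
            = 2⁻¹ * ((convM ζ ε μ x - ρb x * φ x) ^ 2 / ρb x) := by
          field_simp; ring
        have : 0 ≤ 2⁻¹ * ((convM ζ ε μ x - ρb x * φ x) ^ 2 / ρb x) := by positivity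
        linarith
    _ = _ := by
        have hm1 : Measurable fun x => ENNReal.ofReal (convM ζ ε μ x ^ 2 / ρb x) :=
          ((hcm.pow_const 2).div hρc.measurable).ennreal_ofReal
        rw [lintegral_add_left (hm1.const_mul _), lintegral_const_mul' _ _ (by simp),
          lintegral_const_mul' _ _ (by simp), regEnergyE]

/-- Jensen's inequality for the probability density `k`. -/
lemma sq_lintegral_mul_le {α : Type*} [MeasurableSpace α] {m : Measure α} {k f : α → ℝ≥0∞}
    (hk : Measurable k) (hf : Measurable f) (h1 : ∫⁻ y, k y ∂m = 1) :
    (∫⁻ y, k y * f y ∂m) ^ 2 ≤ ∫⁻ y, k y * f y ^ 2 ∂m := by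
  have hP : IsProbabilityMeasure (m.withDensity k) := ⟨by simp [h1]⟩
  have h2 := eLpNorm_le_eLpNorm_of_exponent_le (μ := m.withDensity k) (f := f) (p := 1) (q := 2)
    (by norm_num) hf.aestronglyMeasurable
  rw [eLpNorm_one_eq_lintegral_enorm] at h2
  have h3 := eLpNorm_nnreal_pow_eq_lintegral (μ := m.withDensity k) (f := f) (p := 2) (by norm_num)
  have h4 : (∫⁻ y, ‖f y‖ₑ ∂(m.withDensity k)) ^ 2 ≤ ∫⁻ y, ‖f y‖ₑ ^ 2 ∂(m.withDensity k) := by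
    calc _ ≤ (eLpNorm f 2 (m.withDensity k)) ^ 2 := by gcongr
      _ = _ := by simpa using h3
  simp only [enorm_eq_self] at h4
  rwa [lintegral_withDensity_eq_lintegral_mul _ hk hf,
    lintegral_withDensity_eq_lintegral_mul _ hk (hf.pow_const 2)] at h4

lemma regEnergyE_le {d : ℕ} {ζ : Ed d → ℝ} (h : Moll ζ) {ε : ℝ} (hε : 0 < ε)
    {ρb : Ed d → ℝ} (hρc : Continuous ρb) (hρ : ∀ x, 0 < ρb x) {C : ℝ}
    (hC : ∀ x, (ρb x)⁻¹ ≤ C)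
    (ν : Measure (Ed d)) [IsProbabilityMeasure ν] (hν : ν ≪ volume) :
    regEnergyE ζ ε ρb ν ≤ 2⁻¹ * ∫⁻ y, (ν.rnDeriv volume y) ^ 2 *
      ENNReal.ofReal (convF ζ ε (fun x => (ρb x)⁻¹) y) := by
  have hz := zE_cont h ε
  have hic : Continuous fun x => (ρb x)⁻¹ := hρc.inv₀ fun x => (hρ x).ne'
  unfold regEnergyE
  gcongr 2⁻¹ * ?_
  have hfm : Measurable (ν.rnDeriv volume) := Measure.measurable_rnDeriv _ _
  set f := ν.rnDeriv volume
  calc ∫⁻ x, ENNReal.ofReal (convM ζ ε ν x ^ 2 / ρb x)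
      = ∫⁻ x, (∫⁻ y, ENNReal.ofReal (zE ζ ε (x - y)) * f y) ^ 2 * ENNReal.ofReal (ρb x)⁻¹ := by
        refine lintegral_congr fun x => ?_
        rw [div_eq_mul_inv, ENNReal.ofReal_mul (by positivity),
          ENNReal.ofReal_pow (convM_nonneg h hε _ _), ofReal_convM h hε,
          ← lintegral_rnDeriv_mul hν]
        · simp_rw [mul_comm]; rfl
        · exact (Continuous.measurable (by fun_prop)).ennreal_ofReal.aemeasurable
    _ ≤ ∫⁻ x, (∫⁻ y, ENNReal.ofReal (zE ζ ε (x - y)) * f y ^ 2) * ENNReal.ofReal (ρb x)⁻¹ := by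
        refine lintegral_mono fun x => ?_
        gcongr ?_ * _
        exact sq_lintegral_mul_le (Continuous.measurable (by fun_prop)).ennreal_ofReal hfm
          (lintegral_zE h hε x)
    _ = ∫⁻ x, ∫⁻ y, ENNReal.ofReal (zE ζ ε (x - y)) * f y ^ 2 * ENNReal.ofReal (ρb x)⁻¹ :=
        lintegral_congr fun x => (lintegral_mul_const' _ _ ENNReal.ofReal_ne_top).symm
    _ = ∫⁻ y, ∫⁻ x, ENNReal.ofReal (zE ζ ε (x - y)) * f y ^ 2 * ENNReal.ofReal (ρb x)⁻¹ := by
        apply lintegral_lintegral_swap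
        apply Measurable.aemeasurable
        unfold Function.uncurry
        exact ((Continuous.measurable (by fun_prop)).ennreal_ofReal.mul
          ((hfm.comp measurable_snd).pow_const 2)).mul
          (hic.measurable.comp measurable_fst).ennreal_ofReal
    _ = _ := by
        refine lintegral_congr fun y => ?_
        rw [← lintegral_zE_mul h hε hic (M := C)
          (fun x => by rw [abs_of_pos (inv_pos.2 (hρ x))]; exact hC x)
          (fun x => (inv_pos.2 (hρ x)).le) y, ← lintegral_const_mul]
        · exact lintegral_congr fun x => by ring
        · exact (Continuous.measurable (by fun_prop)).ennreal_ofReal.mul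
            hic.measurable.ennreal_ofReal

/-- Upper bound on `E_ε` in the limit `ε → 0`, for a fixed measure of finite energy. -/
lemma eventually_regEnergyE_le {d : ℕ} {ζ : Ed d → ℝ} (h : Moll ζ)
    {ρb : Ed d → ℝ} (hρc : Continuous ρb) (hρ : ∀ x, 0 < ρb x) {C : ℝ}
    (hC : ∀ x, (ρb x)⁻¹ ≤ C) (hC' : ∀ x, ρb x ≤ C)
    (ν : Measure (Ed d)) [IsProbabilityMeasure ν] (hν : intEnergy ρb ν ≠ ⊤)
    {η : ℝ} (hη : 0 < η) :
    ∀ᶠ ε in 𝓝[>] (0 : ℝ), regEnergyE ζ ε ρb ν ≤ intEnergy ρb ν + ENNReal.ofReal η := by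
  have hac : ν ≪ volume := by
    by_contra hn
    exact hν (by rw [intEnergy, if_neg hn])
  have hic : Continuous fun x => (ρb x)⁻¹ := hρc.inv₀ fun x => (hρ x).ne'
  have hb : ∀ x, |(ρb x)⁻¹| ≤ C := fun x => by rw [abs_of_pos (inv_pos.2 (hρ x))]; exact hC x
  have hfm : Measurable (ν.rnDeriv volume) := Measure.measurable_rnDeriv _ _
  have hE : intEnergy ρb ν
      = 2⁻¹ * ∫⁻ x, (ν.rnDeriv volume x) ^ 2 * ENNReal.ofReal (ρb x)⁻¹ := by
    rw [intEnergy, if_pos hac]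
    congr 1
    refine lintegral_congr fun x => ?_
    rw [ENNReal.ofReal_inv_of_pos (hρ x), div_eq_mul_inv]
  have hfin : ∫⁻ x, (ν.rnDeriv volume x) ^ 2 * ENNReal.ofReal (ρb x)⁻¹ ≠ ⊤ := by
    intro ht
    rw [hE, ht] at hν
    simp at hν
  have hlim : Tendsto (fun ε => 2⁻¹ * ∫⁻ y, (ν.rnDeriv volume y) ^ 2 *
      ENNReal.ofReal (convF ζ ε (fun x => (ρb x)⁻¹) y)) (𝓝[>] (0 : ℝ))
      (𝓝 (intEnergy ρb ν)) := by
    rw [hE]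
    refine ENNReal.Tendsto.const_mul ?_ (Or.inr (by simp))
    have hC0 : 0 ≤ C := ((hρ 0).le).trans (hC' 0)
    refine tendsto_lintegral_filter_of_dominated_convergence
      (fun y => (ν.rnDeriv volume y) ^ 2 * ENNReal.ofReal (ρb y)⁻¹ * ENNReal.ofReal (C * C))
      ?_ ?_ ?_ ?_
    · exact Eventually.of_forall fun ε =>
        (hfm.pow_const 2).mul (measurable_convF h ε hic).ennreal_ofReal
    · filter_upwards [self_mem_nhdsWithin] with ε hε
      refine ae_of_all _ fun y => ?_
      rw [mul_assoc, ← ENNReal.ofReal_mul (inv_pos.2 (hρ y)).le]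
      gcongr
      refine (le_abs_self _).trans ((abs_convF_le h hε hb y).trans ?_)
      have h1 := hρ y
      rw [inv_mul_eq_div, le_div_iff₀ h1]
      exact mul_le_mul_of_nonneg_left (hC' y) hC0
    · rw [lintegral_mul_const' _ _ ENNReal.ofReal_ne_top]
      exact ENNReal.mul_ne_top hfin ENNReal.ofReal_ne_top
    · filter_upwards [Measure.rnDeriv_lt_top ν volume] with y hy
      refine ENNReal.Tendsto.const_mul ?_ (Or.inr (ENNReal.pow_ne_top hy.ne))
      exact ENNReal.tendsto_ofReal (tendsto_convF_pt h hic hb y)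
  have hlt : intEnergy ρb ν < intEnergy ρb ν + ENNReal.ofReal η :=
    ENNReal.lt_add_right hν (by simpa using hη)
  filter_upwards [hlim.eventually_le_const hlt, self_mem_nhdsWithin] with ε h1 hε
  exact (regEnergyE_le h hε hρc hρ hC ν hac).trans h1

/-! ### The dual characterization of the internal energy -/

lemma isLocallyFinite_add {X : Type*} [TopologicalSpace X] [MeasurableSpace X] (a b : Measure X)
    [IsLocallyFiniteMeasure a] [IsLocallyFiniteMeasure b] : IsLocallyFiniteMeasure (a + b) := by
  refine ⟨fun x => ?_⟩
  obtain ⟨s, hs, hs'⟩ := a.finiteAt_nhds x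
  obtain ⟨t, ht, ht'⟩ := b.finiteAt_nhds x
  refine ⟨s ∩ t, inter_mem hs ht, ?_⟩
  rw [Measure.add_apply]
  exact ENNReal.add_lt_top.2 ⟨(measure_mono Set.inter_subset_left).trans_lt hs',
    (measure_mono Set.inter_subset_right).trans_lt ht'⟩

lemma eLpNorm_two_sq {α : Type*} [MeasurableSpace α] (m : Measure α) (φ : α → ℝ) :
    eLpNorm φ 2 m ^ 2 = ∫⁻ x, ‖φ x‖ₑ ^ 2 ∂m := by
  simpa using eLpNorm_nnreal_pow_eq_lintegral (μ := m) (f := φ) (p := 2) (by norm_num)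

lemma lintegral_weighted_sq {d : ℕ} {ρb : Ed d → ℝ} (hρc : Continuous ρb) (hρ : ∀ x, 0 < ρb x)
    {u : Ed d → ℝ} (hu : Measurable u) :
    ∫⁻ x, ENNReal.ofReal (ρb x * u x ^ 2)
      = eLpNorm u 2 (volume.withDensity (fun x => ENNReal.ofReal (ρb x))) ^ 2 := by
  rw [eLpNorm_two_sq, lintegral_withDensity_eq_lintegral_mul _
    hρc.measurable.ennreal_ofReal (hu.enorm.pow_const 2)]
  refine lintegral_congr fun x => ?_
  rw [ENNReal.ofReal_mul (hρ x).le, Pi.mul_apply, ← sq_abs, ENNReal.ofReal_pow (abs_nonneg _),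
    Real.enorm_eq_ofReal_abs]

/-- The dual inequality passes from nonnegative continuous compactly supported functions to
nonnegative functions in `L²(ρ̄ dx + μ)`, by density. -/
lemma dual_extend {d : ℕ} {ρb : Ed d → ℝ} (hρc : Continuous ρb) (hρ : ∀ x, 0 < ρb x)
    (μ : Measure (Ed d)) [IsProbabilityMeasure μ] {A : ℝ≥0∞}
    (H : ∀ φ : Ed d → ℝ, Continuous φ → HasCompactSupport φ → (∀ x, 0 ≤ φ x) →
      ∫⁻ x, ENNReal.ofReal (φ x) ∂μ ≤ A + 2⁻¹ * ∫⁻ x, ENNReal.ofReal (ρb x * φ x ^ 2))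
    {g : Ed d → ℝ} (hg0 : ∀ x, 0 ≤ g x) (hgm : Measurable g)
    (hg : MemLp g 2 (volume.withDensity (fun x => ENNReal.ofReal (ρb x)) + μ)) :
    ∫⁻ x, ENNReal.ofReal (g x) ∂μ ≤ A + 2⁻¹ * ∫⁻ x, ENNReal.ofReal (ρb x * g x ^ 2) := by
  set lam := (volume : Measure (Ed d)).withDensity (fun x => ENNReal.ofReal (ρb x)) with hlam
  have : IsLocallyFiniteMeasure lam := IsLocallyFiniteMeasure.withDensity_ofReal hρc
  have : IsLocallyFiniteMeasure (lam + μ) := isLocallyFinite_add _ _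
  have hsq : ∀ u : Ed d → ℝ, Measurable u →
      ∫⁻ x, ENNReal.ofReal (ρb x * u x ^ 2) = eLpNorm u 2 lam ^ 2 :=
    fun u hu => lintegral_weighted_sq hρc hρ hu
  have key : ∀ η : NNReal, 0 < η → ∫⁻ x, ENNReal.ofReal (g x) ∂μ
      ≤ A + 2⁻¹ * (eLpNorm g 2 lam + η) ^ 2 + η := by
    intro η hη
    obtain ⟨φ, hφs, hφη, hφc, -⟩ := hg.exists_hasCompactSupport_eLpNorm_sub_le (by norm_num)
      (ε := η) (by simpa using hη.ne')
    set ψ : Ed d → ℝ := fun x => max (φ x) 0 with hψ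
    have hψc : Continuous ψ := hφc.max continuous_const
    have hψs : HasCompactSupport ψ :=
      hφs.comp_left (g := fun t : ℝ => max t 0) (by simp)
    have hψη : eLpNorm (g - ψ) 2 (lam + μ) ≤ η := by
      refine (eLpNorm_mono fun x => ?_).trans hφη
      simp only [Pi.sub_apply, Real.norm_eq_abs, hψ]
      have := abs_max_sub_max_le_abs (g x) (φ x) 0
      rwa [max_eq_left (hg0 x)] at this
    have h1 := H ψ hψc hψs fun x => le_max_right _ _
    rw [hsq ψ hψc.measurable] at h1
    have hmeas : AEStronglyMeasurable (g - ψ) lam :=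
      (hgm.sub hψc.measurable).aestronglyMeasurable
    have h2 : eLpNorm ψ 2 lam ≤ eLpNorm g 2 lam + η := by
      have e : ψ = g - (g - ψ) := by simp
      calc eLpNorm ψ 2 lam = eLpNorm (g - (g - ψ)) 2 lam := by rw [← e]
        _ ≤ eLpNorm g 2 lam + eLpNorm (g - ψ) 2 lam :=
          eLpNorm_sub_le hgm.aestronglyMeasurable hmeas (by norm_num)
        _ ≤ _ := by
          gcongr
          exact (eLpNorm_mono_measure _ (Measure.le_add_right le_rfl)).trans hψη
    have h3 : ∫⁻ x, ‖(g - ψ) x‖ₑ ∂μ ≤ η := by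
      rw [← eLpNorm_one_eq_lintegral_enorm]
      exact (eLpNorm_le_eLpNorm_of_exponent_le (by norm_num)
        (hgm.sub hψc.measurable).aestronglyMeasurable).trans
        ((eLpNorm_mono_measure _ (Measure.le_add_left le_rfl)).trans hψη)
    calc ∫⁻ x, ENNReal.ofReal (g x) ∂μ
        ≤ ∫⁻ x, (ENNReal.ofReal (ψ x) + ‖(g - ψ) x‖ₑ) ∂μ := by
          refine lintegral_mono fun x => ?_
          rw [Real.enorm_eq_ofReal_abs, ← ENNReal.ofReal_add (le_max_right _ _) (abs_nonneg _)]
          refine ENNReal.ofReal_le_ofReal ?_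
          have := le_abs_self ((g - ψ) x)
          simp only [Pi.sub_apply] at this ⊢
          linarith
      _ = ∫⁻ x, ENNReal.ofReal (ψ x) ∂μ + ∫⁻ x, ‖(g - ψ) x‖ₑ ∂μ :=
          lintegral_add_left hψc.measurable.ennreal_ofReal _
      _ ≤ _ := by
          gcongr
          refine h1.trans ?_
          gcongr
  rw [hsq g hgm]
  have hnt : eLpNorm g 2 lam ≠ ⊤ :=
    ((eLpNorm_mono_measure _ (Measure.le_add_right le_rfl)).trans_lt hg.2).ne
  have hlim : Tendsto (fun η : NNReal => A + 2⁻¹ * (eLpNorm g 2 lam + η) ^ 2 + (η : ℝ≥0∞)) (𝓝[>] 0)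
      (𝓝 (A + 2⁻¹ * (eLpNorm g 2 lam + (0 : NNReal)) ^ 2 + (0 : NNReal))) := by
    have hc : Tendsto (fun η : NNReal => (η : ℝ≥0∞)) (𝓝[>] 0) (𝓝 ((0 : NNReal) : ℝ≥0∞)) :=
      (ENNReal.continuous_coe.tendsto 0).mono_left nhdsWithin_le_nhds
    refine Tendsto.add (Tendsto.add tendsto_const_nhds ?_) hc
    refine ENNReal.Tendsto.const_mul ?_ (Or.inr (by simp))
    exact ((ENNReal.continuous_pow 2).tendsto _).comp (tendsto_const_nhds.add hc)
  have := ge_of_tendsto hlim (by filter_upwards [self_mem_nhdsWithin] with η hη using key η hη)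
  simpa using this

/-- If `∫ φ dμ ≤ A + ½ ∫ ρ̄ φ²` for all nonnegative continuous compactly supported `φ`, then
`E(μ) ≤ A`. Testing with large multiples of indicators of null sets gives absolute continuity;
testing with truncations of `(dμ/dx)/ρ̄` gives the bound. -/
lemma intEnergy_le_of_dual {d : ℕ} {ρb : Ed d → ℝ} (hρc : Continuous ρb) (hρ : ∀ x, 0 < ρb x)
    (μ : Measure (Ed d)) [IsProbabilityMeasure μ] {A : ℝ≥0∞} (hA : A ≠ ⊤)
    (H : ∀ φ : Ed d → ℝ, Continuous φ → HasCompactSupport φ → (∀ x, 0 ≤ φ x) →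
      ∫⁻ x, ENNReal.ofReal (φ x) ∂μ ≤ A + 2⁻¹ * ∫⁻ x, ENNReal.ofReal (ρb x * φ x ^ 2)) :
    intEnergy ρb μ ≤ A := by
  set lam := (volume : Measure (Ed d)).withDensity (fun x => ENNReal.ofReal (ρb x)) with hlam
  have : IsLocallyFiniteMeasure lam := IsLocallyFiniteMeasure.withDensity_ofReal hρc
  have : IsLocallyFiniteMeasure (lam + μ) := isLocallyFinite_add _ _
  have hac : μ ≪ volume := by
    refine Measure.AbsolutelyContinuous.mk fun s hs hs0 => ?_
    have hlams : lam s = 0 := withDensity_absolutelyContinuous _ _ hs0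
    have hN : ∀ N : ℕ, (N : ℝ≥0∞) * μ s ≤ A := by
      intro N
      have h1 := dual_extend hρc hρ μ H (g := s.indicator fun _ => (N : ℝ))
        (fun x => Set.indicator_nonneg (fun _ _ => Nat.cast_nonneg N) x)
        (measurable_const.indicator hs)
        (memLp_indicator_const 2 hs (N : ℝ) (Or.inr (by
          rw [Measure.add_apply, ← hlam, hlams, zero_add]; exact measure_ne_top μ s)))
      have h2 : ∫⁻ x, ENNReal.ofReal (ρb x * s.indicator (fun _ => (N : ℝ)) x ^ 2) = 0 := by
        rw [lintegral_eq_zero_iff' ]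
        · filter_upwards [measure_eq_zero_iff_ae_notMem.1 hs0] with x hx
          simp [hx]
        · exact (hρc.measurable.mul
            ((measurable_const.indicator hs).pow_const 2)).ennreal_ofReal.aemeasurable
      have h3 : ∫⁻ x, ENNReal.ofReal (s.indicator (fun _ => (N : ℝ)) x) ∂μ = N * μ s := by
        rw [← lintegral_indicator_const hs]
        refine lintegral_congr fun x => ?_
        by_cases hx : x ∈ s <;> simp [hx]
      rwa [h2, h3, mul_zero, add_zero] at h1
    by_contra hne
    obtain ⟨N, hN'⟩ := ENNReal.exists_nat_mul_gt hne hA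
    exact absurd (hN N) (not_le.2 hN')
  rw [intEnergy, if_pos hac]
  have hfm : Measurable (μ.rnDeriv volume) := Measure.measurable_rnDeriv _ _
  have hft := Measure.rnDeriv_lt_top μ volume
  set f := μ.rnDeriv volume with hf
  set q : Ed d → ℝ := fun x => (f x).toReal / ρb x with hq
  have hq0 : ∀ x, 0 ≤ q x := fun x => div_nonneg ENNReal.toReal_nonneg (hρ x).le
  have hqm : Measurable q := hfm.ennreal_toReal.div hρc.measurable
  set u : ℕ → Ed d → ℝ := fun N => (ball (0 : Ed d) N).indicator fun x => min (q x) N with hu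
  have hu0 : ∀ N x, 0 ≤ u N x := fun N x =>
    Set.indicator_nonneg (fun x _ => le_min (hq0 x) (Nat.cast_nonneg N)) x
  have huq : ∀ N x, u N x ≤ q x := fun N x =>
    (Set.indicator_le_self' (fun _ _ => hq0 _) x).trans'
      (Set.indicator_le_indicator (min_le_left _ _))
  have hum : ∀ N, Measurable (u N) := fun N =>
    (hqm.min measurable_const).indicator measurableSet_ball
  have huL : ∀ N, MemLp (u N) 2 (lam + μ) := by
    intro N
    rw [memLp_indicator_iff_restrict measurableSet_ball]
    have : IsFiniteMeasure ((lam + μ).restrict (ball (0 : Ed d) N)) := ⟨by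
      rw [Measure.restrict_apply_univ]
      exact (measure_mono ball_subset_closedBall).trans_lt
        (isCompact_closedBall (0 : Ed d) N).measure_lt_top⟩
    refine MemLp.of_bound (hqm.min measurable_const).aestronglyMeasurable N (ae_of_all _ fun x => ?_)
    rw [Real.norm_of_nonneg (le_min (hq0 x) (Nat.cast_nonneg N))]
    exact min_le_right _ _
  have hbound : ∀ N, 2⁻¹ * ∫⁻ x, ENNReal.ofReal (ρb x * u N x ^ 2) ≤ A := by
    intro N
    have h1 := dual_extend hρc hρ μ H (hu0 N) (hum N) (huL N)
    have hT : ∫⁻ x, ENNReal.ofReal (ρb x * u N x ^ 2) ≠ ⊤ := by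
      rw [lintegral_weighted_sq hρc hρ (hum N)]
      exact ENNReal.pow_ne_top
        ((eLpNorm_mono_measure _ (Measure.le_add_right le_rfl)).trans_lt (huL N).2).ne
    have h2 : ∫⁻ x, ENNReal.ofReal (ρb x * u N x ^ 2) ≤ ∫⁻ x, ENNReal.ofReal (u N x) ∂μ := by
      rw [← lintegral_rnDeriv_mul hac (hum N).ennreal_ofReal.aemeasurable]
      refine lintegral_mono_ae ?_
      filter_upwards [hft] with x hx
      rw [← hf, ← ENNReal.ofReal_toReal hx.ne, ← ENNReal.ofReal_mul ENNReal.toReal_nonneg]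
      refine ENNReal.ofReal_le_ofReal ?_
      have h3 := huq N x
      rw [hq, le_div_iff₀ (hρ x)] at h3
      have := mul_le_mul_of_nonneg_right h3 (hu0 N x)
      nlinarith
    have h3 := h2.trans h1
    set T := ∫⁻ x, ENNReal.ofReal (ρb x * u N x ^ 2)
    have h4 : 2⁻¹ * T + 2⁻¹ * T ≤ A + 2⁻¹ * T := by
      rwa [← add_mul, ENNReal.inv_two_add_inv_two, one_mul]
    exact (ENNReal.add_le_add_iff_right (ENNReal.mul_ne_top (by simp) hT)).1 h4
  have hlim : ∀ᵐ x, f x ^ 2 / ENNReal.ofReal (ρb x)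
      = liminf (fun N : ℕ => ENNReal.ofReal (ρb x * u N x ^ 2)) atTop := by
    filter_upwards [hft] with x hx
    have hev : ∀ᶠ N : ℕ in atTop, ENNReal.ofReal (ρb x * u N x ^ 2)
        = f x ^ 2 / ENNReal.ofReal (ρb x) := by
      obtain ⟨N0, hN0⟩ := exists_nat_gt (max ‖x‖ (q x))
      filter_upwards [eventually_ge_atTop N0] with N hN
      have hN' : (N0 : ℝ) ≤ N := by exact_mod_cast hN
      have hxN : x ∈ ball (0 : Ed d) N := by
        simpa using (le_max_left _ _).trans_lt hN0 |>.trans_le hN'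
      have huN : u N x = q x := by
        simp only [hu, Set.indicator_of_mem hxN]
        exact min_eq_left (((le_max_right _ _).trans_lt hN0).le.trans hN')
      have hp := hρ x
      rw [huN, hq, ← ENNReal.ofReal_toReal hx.ne, ← ENNReal.ofReal_pow ENNReal.toReal_nonneg,
        ← ENNReal.ofReal_div_of_pos hp]
      congr 1
      field_simp
    rw [liminf_congr hev, liminf_const]
  calc 2⁻¹ * ∫⁻ x, f x ^ 2 / ENNReal.ofReal (ρb x)
      = ∫⁻ x, 2⁻¹ * liminf (fun N : ℕ => ENNReal.ofReal (ρb x * u N x ^ 2)) atTop := by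
        rw [lintegral_congr_ae hlim, lintegral_const_mul' _ _ (by simp)]
    _ ≤ 2⁻¹ * liminf (fun N : ℕ => ∫⁻ x, ENNReal.ofReal (ρb x * u N x ^ 2)) atTop := by
        rw [lintegral_const_mul' _ _ (by simp)]
        gcongr
        exact lintegral_liminf_le fun N =>
          (hρc.measurable.mul ((hum N).pow_const 2)).ennreal_ofReal
    _ ≤ 2⁻¹ * (2 * A) := by
        gcongr
        rw [← liminf_const (2 * A) (f := (atTop : Filter ℕ))]
        refine liminf_le_liminf (Eventually.of_forall fun N => ?_)
        have := mul_le_mul_right (hbound N) 2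
        rwa [← mul_assoc, ENNReal.mul_inv_cancel (by simp) (by simp), one_mul] at this
    _ = A := by rw [← mul_assoc, ENNReal.inv_mul_cancel (by simp) (by simp), one_mul]

/-! ### The limit energy: finiteness and uniqueness of minimizers -/

lemma intEnergy_eq_ofReal {d : ℕ} {ρb : Ed d → ℝ} (hρ : ∀ x, 0 < ρb x)
    {μ : Measure (Ed d)} (hμ : μ ≪ volume) {r : Ed d → ℝ} (hr0 : ∀ x, 0 ≤ r x)
    (hr : ∀ᵐ x, μ.rnDeriv volume x = ENNReal.ofReal (r x)) :
    intEnergy ρb μ = 2⁻¹ * ∫⁻ x, ENNReal.ofReal (r x ^ 2 / ρb x) := by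
  rw [intEnergy, if_pos hμ]
  congr 1
  refine lintegral_congr_ae ?_
  filter_upwards [hr] with x hx
  rw [hx, ENNReal.ofReal_div_of_pos (hρ x), ENNReal.ofReal_pow (hr0 x)]

/-- Parallelogram identity for the quadratic energy `E`. -/
lemma intEnergy_mid {d : ℕ} {ρb : Ed d → ℝ} (hρc : Continuous ρb) (hρ : ∀ x, 0 < ρb x)
    (μ ν : Measure (Ed d)) [IsProbabilityMeasure μ] [IsProbabilityMeasure ν]
    (hμ : μ ≪ volume) (hν : ν ≪ volume) :
    intEnergy ρb ((2⁻¹ : NNReal) • μ + (2⁻¹ : NNReal) • ν) + 2⁻¹ * ∫⁻ x, ENNReal.ofReal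
      (((μ.rnDeriv volume x).toReal - (ν.rnDeriv volume x).toReal) ^ 2 / 4 / ρb x)
      = 2⁻¹ * (intEnergy ρb μ + intEnergy ρb ν) := by
  have hac : ((2⁻¹ : NNReal) • μ + (2⁻¹ : NNReal) • ν) ≪ volume :=
    Measure.AbsolutelyContinuous.add_left_iff.2 ⟨hμ.smul_left _, hν.smul_left _⟩
  have hd : ∀ᵐ x, ((2⁻¹ : NNReal) • μ + (2⁻¹ : NNReal) • ν).rnDeriv volume x
      = ENNReal.ofReal (((μ.rnDeriv volume x).toReal + (ν.rnDeriv volume x).toReal) / 2) := by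
    filter_upwards [Measure.rnDeriv_add ((2⁻¹ : NNReal) • μ) ((2⁻¹ : NNReal) • ν) volume,
      Measure.rnDeriv_smul_left μ volume 2⁻¹, Measure.rnDeriv_smul_left ν volume 2⁻¹,
      Measure.rnDeriv_lt_top μ volume, Measure.rnDeriv_lt_top ν volume] with x h1 h2 h3 h4 h5
    rw [h1, Pi.add_apply, h2, h3, Pi.smul_apply, Pi.smul_apply]
    generalize μ.rnDeriv volume x = a at h4 ⊢
    generalize ν.rnDeriv volume x = b at h5 ⊢
    lift a to NNReal using h4.ne
    lift b to NNReal using h5.ne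
    have : ((a : ℝ≥0∞).toReal + (b : ℝ≥0∞).toReal) / 2 = ((2⁻¹ * a + 2⁻¹ * b : NNReal) : ℝ) := by
      simp only [ENNReal.coe_toReal, NNReal.coe_add, NNReal.coe_mul, NNReal.coe_inv]
      push_cast
      ring
    rw [this, ENNReal.ofReal_coe_nnreal, ENNReal.smul_def, ENNReal.smul_def]
    push_cast
    simp
  have hμm := (Measure.measurable_rnDeriv μ volume).ennreal_toReal
  have hνm := (Measure.measurable_rnDeriv ν volume).ennreal_toReal
  have hμr : ∀ᵐ x, μ.rnDeriv volume x = ENNReal.ofReal (μ.rnDeriv volume x).toReal := by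
    filter_upwards [Measure.rnDeriv_lt_top μ volume] with x hx
    rw [ENNReal.ofReal_toReal hx.ne]
  have hνr : ∀ᵐ x, ν.rnDeriv volume x = ENNReal.ofReal (ν.rnDeriv volume x).toReal := by
    filter_upwards [Measure.rnDeriv_lt_top ν volume] with x hx
    rw [ENNReal.ofReal_toReal hx.ne]
  rw [intEnergy_eq_ofReal hρ hac (fun x => by positivity) hd,
    intEnergy_eq_ofReal hρ hμ (fun x => ENNReal.toReal_nonneg) hμr,
    intEnergy_eq_ofReal hρ hν (fun x => ENNReal.toReal_nonneg) hνr, ← mul_add, ← mul_add]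
  congr 1
  have hρm := hρc.measurable
  have m1 : Measurable fun x => ENNReal.ofReal
      ((((μ.rnDeriv volume x).toReal + (ν.rnDeriv volume x).toReal) / 2) ^ 2 / ρb x) :=
    ((((hμm.add hνm).div_const 2).pow_const 2).div hρm).ennreal_ofReal
  have m2 : Measurable fun x => ENNReal.ofReal ((μ.rnDeriv volume x).toReal ^ 2 / ρb x) :=
    ((hμm.pow_const 2).div hρm).ennreal_ofReal
  rw [← lintegral_add_left m1, ← lintegral_add_left m2,
    ← lintegral_const_mul' _ _ (by simp)]
  refine lintegral_congr fun x => ?_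
  have hp := hρ x
  have h2 : (2⁻¹ : ℝ≥0∞) = ENNReal.ofReal (2⁻¹ : ℝ) := by
    rw [ENNReal.ofReal_inv_of_pos (by norm_num)]; norm_num
  rw [h2]
  rw [← ENNReal.ofReal_add (by positivity) (by positivity),
    ← ENNReal.ofReal_add (by positivity) (by positivity), ← ENNReal.ofReal_mul (by norm_num)]
  congr 1
  field_simp
  ring

lemma Flim_eq {d : ℕ} {ρb V : Ed d → ℝ} {Ω : Set (Ed d)} {μ : Measure (Ed d)}
    (hE : intEnergy ρb μ ≠ ⊤) (hΩ : μ (closure Ω)ᶜ = 0) :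
    Flim ρb V Ω μ = (((intEnergy ρb μ).toReal + ∫ x, V x ∂μ : ℝ) : EReal) := by
  rw [Flim, confE, if_pos hΩ, EReal.coe_add, EReal.coe_ennreal_toReal hE]
  simp

lemma of_Flim_ne_top {d : ℕ} {ρb V : Ed d → ℝ} {Ω : Set (Ed d)} {μ : Measure (Ed d)}
    (h : Flim ρb V Ω μ ≠ ⊤) : intEnergy ρb μ ≠ ⊤ ∧ μ (closure Ω)ᶜ = 0 := by
  constructor
  · intro hE
    apply h
    rw [Flim, hE, EReal.coe_ennreal_top, EReal.top_add_coe]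
    exact EReal.top_add_of_ne_bot (by simp)
  · by_contra hΩ
    apply h
    rw [Flim, confE, if_neg hΩ, EReal.coe_ennreal_top]
    refine EReal.add_top_of_ne_bot ?_
    rw [Ne, EReal.add_eq_bot_iff]
    simp

/-- The uniform distribution on `Ω` has finite energy. -/
lemma exists_finite_energy {d : ℕ} {ρb : Ed d → ℝ} {C : ℝ} (hρ : ∀ x, 0 < ρb x)
    (hC : ∀ x, (ρb x)⁻¹ ≤ C) {Ω : Set (Ed d)} (hne : Ω.Nonempty) (ho : IsOpen Ω)
    (hb : Bornology.IsBounded Ω) :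
    ∃ ν : Measure (Ed d), IsProbabilityMeasure ν ∧ intEnergy ρb ν ≠ ⊤ ∧ ν (closure Ω)ᶜ = 0 := by
  have hv0 : volume Ω ≠ 0 := (ho.measure_pos volume hne).ne'
  have hvt : volume Ω ≠ ⊤ := hb.measure_lt_top.ne
  set c := (volume Ω)⁻¹ with hc
  have hct : c ≠ ⊤ := ENNReal.inv_ne_top.2 hv0
  set f : Ed d → ℝ≥0∞ := Ω.indicator fun _ => c with hf
  have hfm : Measurable f := measurable_const.indicator ho.measurableSet
  refine ⟨volume.withDensity f, ⟨?_⟩, ?_, ?_⟩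
  · rw [withDensity_apply _ MeasurableSet.univ, Measure.restrict_univ, hf,
      lintegral_indicator_const ho.measurableSet, hc, ENNReal.inv_mul_cancel hv0 hvt]
  · rw [intEnergy, if_pos (withDensity_absolutelyContinuous _ _)]
    refine ENNReal.mul_ne_top (by simp) ?_
    have hle : ∫⁻ x, ((volume.withDensity f).rnDeriv volume x) ^ 2 / ENNReal.ofReal (ρb x)
        ≤ ∫⁻ x, Ω.indicator (fun _ => c ^ 2 * ENNReal.ofReal C) x := by
      refine lintegral_mono_ae ?_
      filter_upwards [Measure.rnDeriv_withDensity volume hfm] with x hx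
      rw [hx, div_eq_mul_inv, ← ENNReal.ofReal_inv_of_pos (hρ x)]
      by_cases hxΩ : x ∈ Ω
      · simp only [hf, Set.indicator_of_mem hxΩ]
        gcongr
        exact hC x
      · simp [hf, hxΩ]
    refine ne_top_of_le_ne_top ?_ hle
    rw [lintegral_indicator_const ho.measurableSet]
    exact ENNReal.mul_ne_top (ENNReal.mul_ne_top (ENNReal.pow_ne_top hct) ENNReal.ofReal_ne_top) hvt
  · rw [withDensity_apply _ isClosed_closure.measurableSet.compl]
    rw [← lintegral_indicator isClosed_closure.measurableSet.compl, lintegral_eq_zero_iff']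
    · refine ae_of_all _ fun x => ?_
      by_cases hx : x ∈ closure Ω
      · simp [hx]
      · have : x ∉ Ω := fun h => hx (subset_closure h)
        simp [hf, this, hx]
    · exact (hfm.indicator isClosed_closure.measurableSet.compl).aemeasurable

lemma Flim_minimizer_unique {d : ℕ} {ρb V : Ed d → ℝ} {Ω : Set (Ed d)} (hρc : Continuous ρb)
    (hρ : ∀ x, 0 < ρb x) (hVc : Continuous V) {M : ℝ} (hV : ∀ x, |V x| ≤ M)
    {μ ν : Measure (Ed d)} [IsProbabilityMeasure μ] [IsProbabilityMeasure ν]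
    (hμt : Flim ρb V Ω μ ≠ ⊤) (hνt : Flim ρb V Ω ν ≠ ⊤)
    (hμ : ∀ m : Measure (Ed d), IsProbabilityMeasure m → Flim ρb V Ω μ ≤ Flim ρb V Ω m)
    (hν : ∀ m : Measure (Ed d), IsProbabilityMeasure m → Flim ρb V Ω ν ≤ Flim ρb V Ω m) :
    μ = ν := by
  obtain ⟨hμE, hμΩ⟩ := of_Flim_ne_top hμt
  obtain ⟨hνE, hνΩ⟩ := of_Flim_ne_top hνt
  have hμa : μ ≪ volume := by
    by_contra hn
    exact hμE (by rw [intEnergy, if_neg hn])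
  have hνa : ν ≪ volume := by
    by_contra hn
    exact hνE (by rw [intEnergy, if_neg hn])
  have hmid := intEnergy_mid hρc hρ μ ν hμa hνa
  set D := ∫⁻ x, ENNReal.ofReal
      (((μ.rnDeriv volume x).toReal - (ν.rnDeriv volume x).toReal) ^ 2 / 4 / ρb x) with hD
  set m := (2⁻¹ : NNReal) • μ + (2⁻¹ : NNReal) • ν with hm
  have hfin : intEnergy ρb m + 2⁻¹ * D ≠ ⊤ := by
    rw [hmid]; exact ENNReal.mul_ne_top (by simp) (ENNReal.add_ne_top.2 ⟨hμE, hνE⟩)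
  obtain ⟨hmE, hDt⟩ := ENNReal.add_ne_top.1 hfin
  have hmP : IsProbabilityMeasure m := ⟨by
    simp only [hm, Measure.add_apply, Measure.smul_apply, measure_univ]
    rw [ENNReal.smul_def, smul_eq_mul, mul_one, ENNReal.coe_inv (by norm_num)]
    exact ENNReal.inv_two_add_inv_two⟩
  have hmΩ : m (closure Ω)ᶜ = 0 := by simp [hm, hμΩ, hνΩ]
  have h1 := hμ m hmP
  have h2 := hν m hmP
  have hVi : ∀ (p : Measure (Ed d)) [IsFiniteMeasure p], Integrable V p := fun p _ =>
    Integrable.of_bound hVc.aestronglyMeasurable M (ae_of_all _ hV)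
  have hVm : ∫ x, V x ∂m = 2⁻¹ * ∫ x, V x ∂μ + 2⁻¹ * ∫ x, V x ∂ν := by
    rw [hm, integral_add_measure (hVi _) (hVi _), integral_smul_nnreal_measure,
      integral_smul_nnreal_measure]
    simp [NNReal.smul_def]
  rw [Flim_eq hμE hμΩ, Flim_eq hmE hmΩ, EReal.coe_le_coe_iff, hVm] at h1
  rw [Flim_eq hνE hνΩ, Flim_eq hmE hmΩ, EReal.coe_le_coe_iff, hVm] at h2
  have h3 := congrArg ENNReal.toReal hmid
  rw [ENNReal.toReal_add hmE hDt, ENNReal.toReal_mul, ENNReal.toReal_mul,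
    ENNReal.toReal_add hμE hνE] at h3
  simp only [ENNReal.toReal_inv, ENNReal.toReal_ofNat] at h3
  have hD0 : D = 0 := by
    have hDt' : D ≠ ⊤ := fun h => hDt (by rw [h]; simp)
    have : D.toReal = 0 := le_antisymm (by linarith) ENNReal.toReal_nonneg
    exact ((ENNReal.toReal_eq_zero_iff D).1 this).resolve_right hDt'
  rw [hD, lintegral_eq_zero_iff'] at hD0
  · have hfg : μ.rnDeriv volume =ᵐ[volume] ν.rnDeriv volume := by
      filter_upwards [hD0, Measure.rnDeriv_lt_top μ volume, Measure.rnDeriv_lt_top ν volume]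
        with x hx h4 h5
      rw [← ENNReal.toReal_eq_toReal_iff' h4.ne h5.ne]
      have hp := hρ x
      rw [Pi.zero_apply, ENNReal.ofReal_eq_zero, div_le_iff₀ hp, zero_mul] at hx
      have : ((μ.rnDeriv volume x).toReal - (ν.rnDeriv volume x).toReal) ^ 2 ≤ 0 := by linarith
      have := pow_eq_zero_iff (two_ne_zero) |>.1 (le_antisymm this (sq_nonneg _))
      linarith
    rw [← Measure.withDensity_rnDeriv_eq μ volume hμa, ← Measure.withDensity_rnDeriv_eq ν volume hνa]
    exact withDensity_congr_ae hfg
  · have hμm := (Measure.measurable_rnDeriv μ volume).ennreal_toReal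
    have hνm := (Measure.measurable_rnDeriv ν volume).ennreal_toReal
    exact (((((hμm.sub hνm).pow_const 2).div_const 4).div
      hρc.measurable).ennreal_ofReal).aemeasurable

/-! ### Compactness and passage to the limit -/

lemma ereal_ineq {a b a' : ℝ≥0∞} {x x' : ℝ} (ha' : a' ≠ ⊤)
    (h : (a : EReal) + (x : EReal) + (b : EReal) ≤ (a' : EReal) + (x' : EReal)) :
    a ≠ ⊤ ∧ b ≠ ⊤ ∧ a.toReal + x + b.toReal ≤ a'.toReal + x' := by
  have hr : (a' : EReal) + (x' : EReal) = ((a'.toReal + x' : ℝ) : EReal) := by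
    rw [EReal.coe_add, EReal.coe_ennreal_toReal ha']
  rw [hr] at h
  have ha : a ≠ ⊤ := by
    rintro rfl
    rw [EReal.coe_ennreal_top, EReal.top_add_coe, EReal.top_add_of_ne_bot (by simp)] at h
    exact EReal.coe_ne_top _ (top_le_iff.1 h)
  have hb : b ≠ ⊤ := by
    rintro rfl
    rw [← EReal.coe_ennreal_toReal ha, EReal.coe_ennreal_top, ← EReal.coe_add,
      EReal.coe_add_top] at h
    exact EReal.coe_ne_top _ (top_le_iff.1 h)
  refine ⟨ha, hb, ?_⟩
  rw [← EReal.coe_ennreal_toReal ha, ← EReal.coe_ennreal_toReal hb] at h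
  exact_mod_cast h

lemma integrable_of_abs_le {d : ℕ} {g : Ed d → ℝ} {M : ℝ} (hg : Measurable g)
    (hM : ∀ x, |g x| ≤ M) (p : Measure (Ed d)) [IsProbabilityMeasure p] : Integrable g p :=
  Integrable.of_bound hg.aestronglyMeasurable M (ae_of_all _ hM)

lemma abs_integral_convF_sub_le {d : ℕ} {ζ : Ed d → ℝ} (h : Moll ζ) {ε η M : ℝ} (hε : 0 < ε)
    {g : Ed d → ℝ} (hg : Continuous g) (hM : ∀ x, |g x| ≤ M)
    (hη : ∀ x, |convF ζ ε g x - g x| ≤ η) (p : Measure (Ed d)) [IsProbabilityMeasure p] :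
    |∫ x, convF ζ ε g x ∂p - ∫ x, g x ∂p| ≤ η := by
  rw [← integral_sub (integrable_of_abs_le (measurable_convF h ε hg) (abs_convF_le h hε hM) p)
    (integrable_of_abs_le hg.measurable hM p)]
  simpa using norm_integral_le_of_norm_le_const (μ := p)
    (f := fun x => convF ζ ε g x - g x) (ae_of_all _ hη)

/-- Real-valued form of the Young-type inequality `lintegral_convF_le`. -/
lemma integral_convF_le {d : ℕ} {ζ : Ed d → ℝ} (h : Moll ζ) {ε : ℝ} (hε : 0 < ε)
    {ρb : Ed d → ℝ} (hρc : Continuous ρb) (hρ : ∀ x, 0 < ρb x) (μ : Measure (Ed d))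
    [IsProbabilityMeasure μ] {φ : Ed d → ℝ} (hφ : Continuous φ) (hc : HasCompactSupport φ)
    (hφ0 : ∀ x, 0 ≤ φ x) (hE : regEnergyE ζ ε ρb μ ≠ ⊤) :
    ∫ x, convF ζ ε φ x ∂μ ≤ (regEnergyE ζ ε ρb μ).toReal + 2⁻¹ * ∫ x, ρb x * φ x ^ 2 := by
  obtain ⟨M, hM⟩ := hc.exists_bound_of_continuous hφ
  have hi : Integrable (fun x => ρb x * φ x ^ 2) := by
    refine Continuous.integrable_of_hasCompactSupport (by fun_prop) ?_
    refine hc.mono' ?_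
    intro x hx
    refine subset_tsupport _ ?_
    simp only [Function.mem_support] at hx ⊢
    intro h0
    simp [h0] at hx
  have hn : ∀ x, 0 ≤ ρb x * φ x ^ 2 := fun x => mul_nonneg (hρ x).le (sq_nonneg _)
  have h1 := lintegral_convF_le h hε hρc hρ μ hφ hM hφ0
  rw [← ofReal_integral_eq_lintegral_ofReal hi (ae_of_all _ hn)] at h1
  have h2 : ∀ x, 0 ≤ convF ζ ε φ x := fun x =>
    integral_nonneg fun y => mul_nonneg (zE_nonneg h hε _) (hφ0 y)
  rw [← ofReal_integral_eq_lintegral_ofReal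
    (integrable_of_abs_le (measurable_convF h ε hφ) (abs_convF_le h hε hM) μ)
    (ae_of_all _ h2)] at h1
  have h3 : 0 ≤ ∫ x, ρb x * φ x ^ 2 := integral_nonneg hn
  have h4 : regEnergyE ζ ε ρb μ + 2⁻¹ * ENNReal.ofReal (∫ x, ρb x * φ x ^ 2)
      = ENNReal.ofReal ((regEnergyE ζ ε ρb μ).toReal + 2⁻¹ * ∫ x, ρb x * φ x ^ 2) := by
    rw [ENNReal.ofReal_add ENNReal.toReal_nonneg (by positivity), ENNReal.ofReal_toReal hE,
      ENNReal.ofReal_mul (by norm_num), ENNReal.ofReal_inv_of_pos (by norm_num)]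
    simp
  rw [h4] at h1
  exact (ENNReal.ofReal_le_ofReal_iff (by positivity)).1 h1

lemma AssumptionV.uniformContinuous {d : ℕ} {V : Ed d → ℝ} (hV : AssumptionV V) :
    UniformContinuous V := by
  obtain ⟨hc, -, -, ⟨M, hM⟩, -⟩ := hV
  refine (lipschitzWith_of_nnnorm_fderiv_le (𝕜 := ℝ) (C := M.toNNReal)
    (hc.differentiable (by norm_num)) fun x => ?_).uniformContinuous
  have h1 : ‖fderiv ℝ V x‖ = ‖gradient V x‖ := by
    rw [gradient, LinearIsometryEquiv.norm_map]
  rw [← NNReal.coe_le_coe, coe_nnnorm, h1]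
  exact (hM x).trans (Real.le_coe_toNNReal M)

/-- Prokhorov's theorem, phrased with ultrafilters: a uniform bound on the integrals of a
potential with compact sublevel sets makes a sequence of probability measures relatively compact. -/
lemma exists_tendsto_ultrafilter {d : ℕ} {w : Ed d → ℝ} (hw : Continuous w)
    (hcpt : ∀ c : ℝ, IsCompact {x | w x ≤ c})
    {P : ℕ → ProbabilityMeasure (Ed d)} {c : ℝ≥0∞} (hc : c ≠ ⊤)
    (hP : ∀ᶠ n in atTop, ∫⁻ x, ENNReal.ofReal (w x) ∂(P n : Measure (Ed d)) ≤ c)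
    (U : Ultrafilter ℕ) (hU : (U : Filter ℕ) ≤ atTop) :
    ∃ μ : ProbabilityMeasure (Ed d), Tendsto P U (𝓝 μ) := by
  let S : Set (ProbabilityMeasure (Ed d)) :=
    {p | ∫⁻ x, ENNReal.ofReal (w x) ∂(p : Measure (Ed d)) ≤ c}
  have hT : IsTightMeasureSet {((μ : ProbabilityMeasure (Ed d)) : Measure (Ed d)) | μ ∈ S} := by
    rw [isTightMeasureSet_iff_exists_isCompact_measure_compl_le]
    intro ε hε
    -- Markov's inequality at a level `n` with `c < n * ε`.
    obtain ⟨n, hn⟩ := ENNReal.exists_nat_mul_gt hε.ne' hc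
    refine ⟨_, hcpt n, ?_⟩
    rintro _ ⟨p, hp, rfl⟩
    have hm := mul_meas_ge_le_lintegral (μ := (p : Measure (Ed d)))
      (ENNReal.measurable_ofReal.comp hw.measurable) (n : ℝ≥0∞)
    have hn0 : (n : ℝ≥0∞) ≠ 0 := by
      rintro h0
      simp [h0] at hn
    have hsub : {x | w x ≤ n}ᶜ ⊆ {x | (n : ℝ≥0∞) ≤ (ENNReal.ofReal ∘ w) x} := by
      intro x hx
      simp only [Set.mem_compl_iff, Set.mem_ofPred_eq, not_le] at hx
      simp only [Set.mem_ofPred_eq, Function.comp]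
      rw [← ENNReal.ofReal_natCast]
      exact ENNReal.ofReal_le_ofReal hx.le
    have h2 : (n : ℝ≥0∞) * (p : Measure (Ed d)) {x | w x ≤ n}ᶜ ≤ n * ε :=
      (mul_le_mul_right (measure_mono hsub) _).trans (hm.trans (le_trans hp hn.le))
    exact (ENNReal.mul_le_mul_iff_right hn0 (by simp)).1 h2
  have hK := isCompact_closure_of_isTightMeasureSet hT
  obtain ⟨μ, -, hμ⟩ := hK.ultrafilter_le_nhds' (U.map P) (by
    rw [Ultrafilter.mem_map]
    exact hU (hP.mono fun n hn => subset_closure hn))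
  exact ⟨μ, hμ⟩

lemma tendsto_integral_of_bounded {d : ℕ} {ι : Type*} {l : Filter ι}
    {P : ι → ProbabilityMeasure (Ed d)} {μ : ProbabilityMeasure (Ed d)} (h : Tendsto P l (𝓝 μ))
    {f : Ed d → ℝ} (hf : Continuous f) {M : ℝ} (hM : ∀ x, |f x| ≤ M) :
    Tendsto (fun n => ∫ x, f x ∂(P n : Measure (Ed d))) l
      (𝓝 (∫ x, f x ∂(μ : Measure (Ed d)))) :=
  ProbabilityMeasure.tendsto_iff_forall_integral_tendsto.1 h
    (BoundedContinuousFunction.ofNormedAddCommGroup f hf M hM)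

/-- A narrow limit of measures with bounded confinement energies is supported in `closure Ω`:
by Markov's inequality every ball away from `closure Ω` has vanishing mass. -/
lemma measure_compl_eq_zero_of_tendsto {d : ℕ} {Ω : Set (Ed d)} {W : ℕ → Ed d → ℝ}
    (hC : ∀ k, AssumptionC (W k)) (hCk : AssumptionCk Ω W) {l : Filter ℕ} [l.NeBot]
    {k : ℕ → ℕ} (hk : Tendsto k l atTop) {P : ℕ → ProbabilityMeasure (Ed d)}
    {μ : ProbabilityMeasure (Ed d)} (h : Tendsto P l (𝓝 μ)) {c : ℝ≥0∞} (hc : c ≠ ⊤)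
    (hP : ∀ᶠ n in l, ∫⁻ x, ENNReal.ofReal (W (k n) x) ∂(P n : Measure (Ed d)) ≤ c) :
    (μ : Measure (Ed d)) (closure Ω)ᶜ = 0 := by
  refine measure_null_of_locally_null _ fun x hx => ?_
  obtain ⟨r, hr, hrs⟩ := Metric.nhds_basis_closedBall.mem_iff.1
    (isClosed_closure.isOpen_compl.mem_nhds hx)
  refine ⟨ball x r, mem_nhdsWithin_of_mem_nhds (ball_mem_nhds x hr), ?_⟩
  have ht := hCk.2 x r hr (closure_ball_subset_closedBall.trans hrs)
  have ht2 : Tendsto (fun n => c / ENNReal.ofReal (sInf (W (k n) '' ball x r))) l (𝓝 0) := by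
    have := ENNReal.Tendsto.const_div (a := c)
      (ENNReal.tendsto_ofReal_atTop.comp (ht.comp hk)) (Or.inr hc)
    simpa using this
  have hle : ∀ᶠ n in l, (P n : Measure (Ed d)) (ball x r)
      ≤ c / ENNReal.ofReal (sInf (W (k n) '' ball x r)) := by
    filter_upwards [hP, (ht.comp hk).eventually_gt_atTop 0] with n hn hpos
    simp only [Function.comp] at hpos
    refine (meas_ge_le_lintegral_div (μ := (P n : Measure (Ed d)))
      (f := fun y => ENNReal.ofReal (W (k n) y)) ?_ (ENNReal.ofReal_pos.2 hpos).ne'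
      ENNReal.ofReal_ne_top |>.trans' (measure_mono ?_)).trans (ENNReal.div_le_div_right hn _)
    · exact (ENNReal.measurable_ofReal.comp (hC _).2.2.1.continuous.measurable).aemeasurable
    · intro y hy
      refine ENNReal.ofReal_le_ofReal (csInf_le ⟨0, ?_⟩ ⟨y, hy, rfl⟩)
      rintro _ ⟨z, -, rfl⟩
      exact (hC _).1 z
  have h0 : Tendsto (fun n => (P n : Measure (Ed d)) (ball x r)) l (𝓝 0) :=
    tendsto_of_tendsto_of_tendsto_of_le_of_le' tendsto_const_nhds ht2
      (Eventually.of_forall fun _ => zero_le) hle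
  have := ProbabilityMeasure.le_liminf_measure_open_of_tendsto h (isOpen_ball (x := x) (ε := r))
  rw [h0.liminf_eq] at this
  exact le_antisymm this zero_le

/-- Upper bound along the minimizers: testing minimality of `p n` against a fixed competitor `ν`
of finite limit energy bounds the energy of `p n` by that of `ν`, up to an error `η`. -/
lemma eventually_energy_le {d : ℕ} {ζ : Ed d → ℝ} (h : Moll ζ) {ρb V : Ed d → ℝ} {C M : ℝ}
    (hρc : Continuous ρb) (hρ : ∀ x, 0 < ρb x) (hC : ∀ x, (ρb x)⁻¹ ≤ C) (hC' : ∀ x, ρb x ≤ C)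
    (hVu : UniformContinuous V) (hVM : ∀ x, |V x| ≤ M) {W : ℕ → Ed d → ℝ}
    {ε : ℕ → ℝ} (hεpos : ∀ n, 0 < ε n) (hε : Tendsto ε atTop (𝓝[>] 0)) {k : ℕ → ℕ}
    {p : ℕ → Measure (Ed d)} (hp : ∀ n, IsProbabilityMeasure (p n))
    {ν : Measure (Ed d)} [IsProbabilityMeasure ν] (hν : intEnergy ρb ν ≠ ⊤)
    (hW : ∀ n, ∫⁻ x, ENNReal.ofReal (W n x) ∂ν = 0)
    (hmin : ∀ n, Fek ζ (ε n) ρb V (W (k n)) (p n) ≤ Fek ζ (ε n) ρb V (W (k n)) ν)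
    {η : ℝ} (hη : 0 < η) :
    ∀ᶠ n in atTop, regEnergyE ζ (ε n) ρb (p n) ≠ ⊤ ∧
      ∫⁻ x, ENNReal.ofReal (W (k n) x) ∂(p n) ≠ ⊤ ∧
      (regEnergyE ζ (ε n) ρb (p n)).toReal + ∫ x, V x ∂(p n) +
        (∫⁻ x, ENNReal.ofReal (W (k n) x) ∂(p n)).toReal
        ≤ (intEnergy ρb ν).toReal + ∫ x, V x ∂ν + η := by
  have hη3 : 0 < η / 3 := by positivity
  filter_upwards [hε.eventually (eventually_regEnergyE_le h hρc hρ hC hC' ν hν hη3),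
    hε.eventually (tendsto_convF_unif h hVu hVM hη3)] with n h1 h2
  have hR : regEnergyE ζ (ε n) ρb ν ≠ ⊤ :=
    ne_top_of_le_ne_top (ENNReal.add_ne_top.2 ⟨hν, ENNReal.ofReal_ne_top⟩) h1
  have h3 := hmin n
  unfold Fek at h3
  rw [hW, EReal.coe_ennreal_zero, add_zero] at h3
  obtain ⟨ha, hb, h4⟩ := ereal_ineq hR h3
  refine ⟨ha, hb, ?_⟩
  have := hp n
  have h5 := abs_le.1 (abs_integral_convF_sub_le h (hεpos n) hVu.continuous hVM h2 (p n))
  have h6 := abs_le.1 (abs_integral_convF_sub_le h (hεpos n) hVu.continuous hVM h2 ν)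
  have h7 : (regEnergyE ζ (ε n) ρb ν).toReal ≤ (intEnergy ρb ν).toReal + η / 3 := by
    have := ENNReal.toReal_mono (ENNReal.add_ne_top.2 ⟨hν, ENNReal.ofReal_ne_top⟩) h1
    rwa [ENNReal.toReal_add hν ENNReal.ofReal_ne_top, ENNReal.toReal_ofReal hη3.le] at this
  linarith [h5.1, h5.2, h6.1, h6.2]

/-- Lower bound in the limit: if the regularized energies of `P n` are asymptotically at most `A`,
every narrow limit `μ` has limit energy at most `A`. -/
lemma energy_le_of_tendsto {d : ℕ} {ζ : Ed d → ℝ} (h : Moll ζ) {ρb V : Ed d → ℝ} {M A : ℝ}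
    (hρc : Continuous ρb) (hρ : ∀ x, 0 < ρb x) (hVc : Continuous V) (hVM : ∀ x, |V x| ≤ M)
    {l : Filter ℕ} [l.NeBot] {ε : ℕ → ℝ} (hεpos : ∀ n, 0 < ε n) (hε : Tendsto ε l (𝓝[>] 0))
    {P : ℕ → ProbabilityMeasure (Ed d)} {μ : ProbabilityMeasure (Ed d)} (hP : Tendsto P l (𝓝 μ))
    (hA : ∀ η : ℝ, 0 < η → ∀ᶠ n in l, regEnergyE ζ (ε n) ρb (P n) ≠ ⊤ ∧
      (regEnergyE ζ (ε n) ρb (P n)).toReal + ∫ x, V x ∂(P n : Measure (Ed d)) ≤ A + η) :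
    intEnergy ρb μ ≠ ⊤ ∧
      (intEnergy ρb μ).toReal + ∫ x, V x ∂(μ : Measure (Ed d)) ≤ A := by
  have key : ∀ φ : Ed d → ℝ, Continuous φ → HasCompactSupport φ → (∀ x, 0 ≤ φ x) →
      ∫ x, φ x ∂(μ : Measure (Ed d)) + ∫ x, V x ∂(μ : Measure (Ed d))
        ≤ A + 2⁻¹ * ∫ x, ρb x * φ x ^ 2 := by
    intro φ hφ hφc hφ0
    obtain ⟨B, hB⟩ := hφc.exists_bound_of_continuous hφ
    refine le_of_forall_pos_le_add fun η hη => ?_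
    have hη2 : 0 < η / 2 := by positivity
    refine le_of_tendsto ((tendsto_integral_of_bounded hP hφ hB).add
      (tendsto_integral_of_bounded hP hVc hVM)) ?_
    filter_upwards [hA _ hη2, hε.eventually (tendsto_convF_unif h
      (hφc.uniformContinuous_of_continuous hφ) hB hη2)] with n h1 h2
    have h3 := integral_convF_le h (hεpos n) hρc hρ (P n : Measure (Ed d)) hφ hφc hφ0 h1.1
    have h4 := abs_le.1 (abs_integral_convF_sub_le h (hεpos n) hφ hB h2 (P n : Measure (Ed d)))
    linarith [h1.2, h4.1]
  set A' := A - ∫ x, V x ∂(μ : Measure (Ed d)) with hA'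
  have hA0 : 0 ≤ A' := by
    have := key (fun _ => 0) continuous_const HasCompactSupport.zero (fun _ => le_rfl)
    simp at this
    linarith
  have hle : intEnergy ρb μ ≤ ENNReal.ofReal A' := by
    refine intEnergy_le_of_dual hρc hρ _ ENNReal.ofReal_ne_top fun φ hφ hφc hφ0 => ?_
    obtain ⟨B, hB⟩ := hφc.exists_bound_of_continuous hφ
    have hi : Integrable (fun x => ρb x * φ x ^ 2) := by
      refine Continuous.integrable_of_hasCompactSupport (by fun_prop) ?_
      refine hφc.mono' fun x hx => subset_tsupport _ ?_
      simp only [Function.mem_support] at hx ⊢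
      intro h0
      simp [h0] at hx
    have hn : ∀ x, 0 ≤ ρb x * φ x ^ 2 := fun x => mul_nonneg (hρ x).le (sq_nonneg _)
    have h3 : 0 ≤ ∫ x, ρb x * φ x ^ 2 := integral_nonneg hn
    rw [← ofReal_integral_eq_lintegral_ofReal hi (ae_of_all _ hn),
      ← ofReal_integral_eq_lintegral_ofReal (integrable_of_abs_le hφ.measurable hB _)
        (ae_of_all _ hφ0)]
    have h5 : ENNReal.ofReal A' + 2⁻¹ * ENNReal.ofReal (∫ x, ρb x * φ x ^ 2)
        = ENNReal.ofReal (A' + 2⁻¹ * ∫ x, ρb x * φ x ^ 2) := by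
      rw [ENNReal.ofReal_add hA0 (by positivity), ENNReal.ofReal_mul (by norm_num),
        ENNReal.ofReal_inv_of_pos (by norm_num)]
      simp
    rw [h5]
    exact ENNReal.ofReal_le_ofReal (by linarith [key φ hφ hφc hφ0])
  refine ⟨ne_top_of_le_ne_top ENNReal.ofReal_ne_top hle, ?_⟩
  have := ENNReal.toReal_mono ENNReal.ofReal_ne_top hle
  rw [ENNReal.toReal_ofReal hA0] at this
  linarith

/-- minimizers of `F_{ε,k}` converge narrowly to the unique minimizer
of `F` as `ε → 0`, `k → ∞`. -/
theorem Fek_minimizers_converge (d : ℕ) (hd : 1 ≤ d) (Ω : Set (Ed d)) (hne : Ω.Nonempty)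
    (ho : IsOpen Ω) (hcv : Convex ℝ Ω)
    (ρb : Ed d → ℝ) (hT : AssumptionT ρb) (ζ : Ed d → ℝ) (hM : AssumptionM ζ)
    (V : Ed d → ℝ) (hV : AssumptionV V)
    (W : ℕ → Ed d → ℝ) (hC : ∀ k, AssumptionC (W k)) (hCk : AssumptionCk Ω W)
    (hW1 : ∀ k x, W 1 x ≤ W k x) (hcpt : ∀ c : ℝ, IsCompact {x : Ed d | W 1 x ≤ c})
    (ρek : ℝ → ℕ → Measure (Ed d))
    (hprob : ∀ ε : ℝ, 0 < ε → ∀ k, IsProbabilityMeasure (ρek ε k))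
    (hmom : ∀ ε : ℝ, 0 < ε → ∀ k, Integrable (fun x => ‖x‖ ^ 2) (ρek ε k))
    (hmin : ∀ ε : ℝ, 0 < ε → ∀ k, ∀ ν : Measure (Ed d), IsProbabilityMeasure ν →
      Integrable (fun x => ‖x‖ ^ 2) ν →
      Fek ζ ε ρb V (W k) (ρek ε k) ≤ Fek ζ ε ρb V (W k) ν)
    (εn : ℕ → ℝ) (hεn : ∀ n, 0 < εn n) (hεn0 : Tendsto εn atTop (𝓝 0))
    (kn : ℕ → ℕ) (hkn : Tendsto kn atTop atTop) :
    ∃ ρ : Measure (Ed d), IsProbabilityMeasure ρ ∧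
      (∀ ν : Measure (Ed d), IsProbabilityMeasure ν → Flim ρb V Ω ρ ≤ Flim ρb V Ω ν) ∧
      (∀ ρ' : Measure (Ed d), IsProbabilityMeasure ρ' →
        (∀ ν : Measure (Ed d), IsProbabilityMeasure ν → Flim ρb V Ω ρ' ≤ Flim ρb V Ω ν) →
        ρ' = ρ) ∧
      NarrowTendsto (fun n => ρek (εn n) (kn n)) ρ := by
  obtain ⟨hρ1, C, hC0, hρC⟩ := hT
  have hρc : Continuous ρb := hρ1.continuous
  have hρ : ∀ x, 0 < ρb x := fun x => (inv_pos.2 hC0).trans_le (hρC x).1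
  have hCinv : ∀ x, (ρb x)⁻¹ ≤ C := fun x => inv_le_of_inv_le₀ hC0 (hρC x).1
  have hz := hM.moll
  have hVu := hV.uniformContinuous
  obtain ⟨M, hVM⟩ := hV.2.2.1
  have hε : Tendsto εn atTop (𝓝[>] 0) :=
    tendsto_nhdsWithin_iff.2 ⟨hεn0, Eventually.of_forall hεn⟩
  let P : ℕ → ProbabilityMeasure (Ed d) := fun n => ⟨ρek (εn n) (kn n), hprob _ (hεn n) _⟩
  have hcl : closure Ω ⊆ {x | W 1 x ≤ 0} :=
    closure_minimal (fun x hx => (hCk.1 1 x hx).le) (hcpt 0).isClosed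
  have hbc : Bornology.IsBounded (closure Ω) := (hcpt 0).isBounded.subset hcl
  -- Energy comparison with any competitor of finite limit energy.
  have hcomp : ∀ ν : Measure (Ed d), IsProbabilityMeasure ν → intEnergy ρb ν ≠ ⊤ →
      ν (closure Ω)ᶜ = 0 → ∀ η : ℝ, 0 < η → ∀ᶠ n in atTop,
        regEnergyE ζ (εn n) ρb (P n) ≠ ⊤ ∧
        ∫⁻ x, ENNReal.ofReal (W (kn n) x) ∂(P n : Measure (Ed d)) ≠ ⊤ ∧
        (regEnergyE ζ (εn n) ρb (P n)).toReal + ∫ x, V x ∂(P n : Measure (Ed d)) +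
          (∫⁻ x, ENNReal.ofReal (W (kn n) x) ∂(P n : Measure (Ed d))).toReal
          ≤ (intEnergy ρb ν).toReal + ∫ x, V x ∂ν + η := by
    intro ν hνp hνE hνs η hη
    have hae : ∀ᵐ x ∂ν, x ∈ closure Ω := by
      rw [ae_iff]
      exact hνs
    have hW0 : ∀ n, ∫⁻ x, ENNReal.ofReal (W n x) ∂ν = 0 := by
      intro n
      have hs : closure Ω ⊆ {x | W n x ≤ 0} :=
        closure_minimal (fun x hx => (hCk.1 n x hx).le)
          (isClosed_le (hC n).2.2.1.continuous continuous_const)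
      rw [lintegral_congr_ae (g := fun _ => 0), lintegral_zero]
      filter_upwards [hae] with x hx
      exact ENNReal.ofReal_of_nonpos (hs hx)
    have hmomν : Integrable (fun x => ‖x‖ ^ 2) ν := by
      obtain ⟨R, hR⟩ := hbc.exists_norm_le
      refine Integrable.of_bound (by fun_prop) (R ^ 2) ?_
      filter_upwards [hae] with x hx
      rw [Real.norm_of_nonneg (by positivity)]
      exact pow_le_pow_left₀ (norm_nonneg _) (hR x hx) 2
    exact eventually_energy_le hz hρc hρ hCinv (fun x => (hρC x).2) hVu hVM hεn hε
      (fun n => hprob _ (hεn n) _) hνE hW0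
      (fun n => hmin _ (hεn n) _ ν hνp hmomν) hη
  obtain ⟨ν₀, hν₀p, hν₀E, hν₀s⟩ := exists_finite_energy hρ hCinv hne ho (hbc.subset subset_closure)
  have hF₀ : Flim ρb V Ω ν₀ ≠ ⊤ := by
    rw [Flim_eq hν₀E hν₀s]
    exact EReal.coe_ne_top _
  obtain ⟨c, hc⟩ : ∃ c : ℝ, ∀ᶠ n in atTop,
      ∫⁻ x, ENNReal.ofReal (W (kn n) x) ∂(P n : Measure (Ed d)) ≤ ENNReal.ofReal c := by
    refine ⟨(intEnergy ρb ν₀).toReal + ∫ x, V x ∂ν₀ + 1 + M, ?_⟩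
    filter_upwards [hcomp ν₀ hν₀p hν₀E hν₀s 1 one_pos] with n hn
    rw [← ENNReal.ofReal_toReal hn.2.1]
    refine ENNReal.ofReal_le_ofReal ?_
    have h1 : |∫ x, V x ∂(P n : Measure (Ed d))| ≤ M := by
      simpa using norm_integral_le_of_norm_le_const (μ := (P n : Measure (Ed d))) (f := V)
        (ae_of_all _ hVM)
    have h2 : 0 ≤ (regEnergyE ζ (εn n) ρb (P n)).toReal := ENNReal.toReal_nonneg
    linarith [hn.2.2, (abs_le.1 h1).1]
  have hex : ∀ U : Ultrafilter ℕ, (U : Filter ℕ) ≤ atTop →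
      ∃ μ : ProbabilityMeasure (Ed d), Tendsto P U (𝓝 μ) := fun U hU =>
    exists_tendsto_ultrafilter (hC 1).2.2.1.continuous hcpt ENNReal.ofReal_ne_top
      (hc.mono fun n hn => (lintegral_mono fun x =>
        ENNReal.ofReal_le_ofReal (hW1 (kn n) x)).trans hn) U hU
  have hlim : ∀ U : Ultrafilter ℕ, (U : Filter ℕ) ≤ atTop → ∀ μ : ProbabilityMeasure (Ed d),
      Tendsto P U (𝓝 μ) → ∀ ν : Measure (Ed d), IsProbabilityMeasure ν →
        Flim ρb V Ω μ ≤ Flim ρb V Ω ν := by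
    intro U hU μ hμ ν hνp
    by_cases hνt : Flim ρb V Ω ν = ⊤
    · rw [hνt]
      exact le_top
    obtain ⟨hνE, hνs⟩ := of_Flim_ne_top hνt
    have hμs := measure_compl_eq_zero_of_tendsto hC hCk (hkn.mono_left hU) hμ
      ENNReal.ofReal_ne_top (hc.filter_mono hU)
    obtain ⟨hμE, hle⟩ := energy_le_of_tendsto hz hρc hρ hVu.continuous hVM hεn
      (hε.mono_left hU) hμ (A := (intEnergy ρb ν).toReal + ∫ x, V x ∂ν) (fun η hη => by
        filter_upwards [(hcomp ν hνp hνE hνs η hη).filter_mono hU] with n hn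
        refine ⟨hn.1, ?_⟩
        have h0 : 0 ≤ (∫⁻ x, ENNReal.ofReal (W (kn n) x) ∂(P n : Measure (Ed d))).toReal :=
          ENNReal.toReal_nonneg
        linarith [hn.2.2])
    rw [Flim_eq hμE hμs, Flim_eq hνE hνs]
    exact_mod_cast hle
  have huniq : ∀ μ ν : Measure (Ed d), IsProbabilityMeasure μ → IsProbabilityMeasure ν →
      (∀ m : Measure (Ed d), IsProbabilityMeasure m → Flim ρb V Ω μ ≤ Flim ρb V Ω m) →
      (∀ m : Measure (Ed d), IsProbabilityMeasure m → Flim ρb V Ω ν ≤ Flim ρb V Ω m) →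
      μ = ν := fun μ ν _ _ hμ hν =>
    Flim_minimizer_unique hρc hρ hVu.continuous hVM
      (ne_top_of_le_ne_top hF₀ (hμ ν₀ hν₀p)) (ne_top_of_le_ne_top hF₀ (hν ν₀ hν₀p)) hμ hν
  obtain ⟨ρ, hρlim⟩ := hex (Ultrafilter.of atTop) (Ultrafilter.of_le _)
  have hρmin := hlim _ (Ultrafilter.of_le _) ρ hρlim
  have hconv : Tendsto P atTop (𝓝 ρ) := by
    rw [tendsto_iff_ultrafilter]
    intro U hU
    obtain ⟨μ, hμ⟩ := hex U hU
    have : μ = ρ := Subtype.ext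
      (huniq μ ρ inferInstance inferInstance (hlim U hU μ hμ) hρmin)
    rwa [this] at hμ
  refine ⟨ρ, inferInstance, hρmin, fun ρ' hp' h' => huniq ρ' ρ hp' inferInstance h' hρmin, ?_⟩
  rintro f hf ⟨B, hB⟩
  exact tendsto_integral_of_bounded hconv hf hB

end
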